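/- arXiv:2312.11172 — 2 statements merged into one kernel-verified Lean document; each statement's English description precedes it below -/
import Mathlib

section
/- Let q > 0, let Ψ ∈ C(ℝ^{n+1}) be nonnegative, and let μ be the measure on ℝ^{n+1} with dμ(X) = Ψ(X)|x|^{q-n} dx dz for X = (x,z), x ∈ ℝⁿ, z ∈ ℝ. Let (K_m) be a sequence of nonempty compact convex subsets of ℝ^{n+1} converging in the Hausdorff metric to a compact convex set K with nonempty interior; if q < n assume additionally that the origin of ℝⁿ lies in pr_H(int K ∩ ∩_m int K_m), where pr_H is the orthogonal projection onto H = e_{n+1}^⊥ ≅ ℝⁿ. Then μ(K_m) → μ(K), and the weighted surface area measures S_{μ,K_m} converge weakly to S_{μ,K} on S^n. -/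
open MeasureTheory Metric Set Filter
open scoped RealInnerProductSpace Pointwise Topology NNReal ENNReal

noncomputable section

namespace PaperJU

open Classical

/-- Euclidean space ℝⁿ. -/
abbrev E (n : ℕ) := EuclideanSpace ℝ (Fin n)

variable {n : ℕ}

/-- The pairing (x, z) ∈ ℝⁿ × ℝ ↦ ℝ^{n+1}. -/
def pairE (x : E n) (z : ℝ) : E (n + 1) :=
  (EuclideanSpace.equiv (Fin (n + 1)) ℝ).symm (Fin.snoc (EuclideanSpace.equiv (Fin n) ℝ x) z)

/-- Orthogonal projection onto H = e_{n+1}^⊥ ≅ ℝⁿ. -/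
def fstE (X : E (n + 1)) : E n :=
  (EuclideanSpace.equiv (Fin n) ℝ).symm (Fin.init (EuclideanSpace.equiv (Fin (n + 1)) ℝ X))

/-- The last coordinate of X ∈ ℝ^{n+1}. -/
def sndE (X : E (n + 1)) : ℝ := X (Fin.last n)

/-- Reflection across H = e_{n+1}^⊥. -/
def reflH (X : E (n + 1)) : E (n + 1) := pairE (fstE X) (-(sndE X))

/-- Epigraph of u, as a subset of ℝⁿ × ℝ. -/
def epi (u : E n → EReal) : Set (E n × ℝ) := {p | u p.1 ≤ (p.2 : EReal)}

/-- Epigraph of u, as a subset of ℝ^{n+1}. -/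
def epiF (u : E n → EReal) : Set (E (n + 1)) := {X | u (fstE X) ≤ ((sndE X : ℝ) : EReal)}

/-- Effective domain of u. -/
def dom (u : E n → EReal) : Set (E n) := {x | u x ≠ ⊤}

/-- u ∈ Conv(ℝⁿ): convex (epigraph convex), lower semicontinuous, proper, never -∞. -/
structure IsConvFn (u : E n → EReal) : Prop where
  convex_epi : Convex ℝ (epi u)
  lsc : LowerSemicontinuous u
  ne_bot : ∀ x, u x ≠ ⊥
  exists_ne_top : ∃ x, u x ≠ ⊤

/-- u ∈ Conv_cd(ℝⁿ): convex with compact domain. -/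
def IsConvCd (u : E n → EReal) : Prop := IsConvFn u ∧ IsCompact (dom u)

/-- u ∈ Conv_coe(ℝⁿ): convex and coercive. -/
def IsConvCoe (u : E n → EReal) : Prop :=
  IsConvFn u ∧ Tendsto u (cocompact (E n)) (𝓝 (⊤ : EReal))

/-- Fenchel–Legendre transform of an extended-real-valued function. -/
def legendre (u : E n → EReal) (y : E n) : EReal :=
  ⨆ x : E n, ((⟪x, y⟫ : ℝ) : EReal) - u x

/-- Real-valued Fenchel–Legendre transform (when finite). -/
def legendreR (u : E n → EReal) (y : E n) : ℝ := (legendre u y).toReal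

/-- Fenchel–Legendre transform of a real-valued function. -/
def conjR (f : E n → ℝ) (x : E n) : EReal := ⨆ y : E n, ((⟪x, y⟫ - f y : ℝ) : EReal)

/-- The perturbation u_t = (u* + tζ)*. -/
def pert (u : E n → EReal) (ζ : E n → ℝ) (t : ℝ) : E n → EReal :=
  conjR fun y => legendreR u y + t * ζ y

/-- e^{-a} for a ∈ ℝ ∪ {±∞}, with e^{-(+∞)} = 0. -/
def expNeg (a : EReal) : ℝ := if a = ⊤ then 0 else Real.exp (-a.toReal)

/-- The functional volume μ_n(u) = ∫ e^{-u}. -/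
def muN (u : E n → EReal) : ℝ := ∫ x : E n, expNeg (u x)

/-- The q-th dual functional volume μ_q(u) = ∫ e^{-u(x)} |x|^{q-n} dx. -/
def muQ (q : ℝ) (u : E n → EReal) : ℝ := ∫ x : E n, expNeg (u x) * ‖x‖ ^ (q - (n : ℝ))

/-- The gradient ∇u, computed through the real-valued representative of u. -/
def grad (u : E n → EReal) (x : E n) : E n := gradient (fun y => (u y).toReal) x

/-- ν is an outer unit normal vector to K at the boundary point y. -/
def IsOuterNormalAt (K : Set (E n)) (ν y : E n) : Prop :=
  ‖ν‖ = 1 ∧ ∀ x ∈ K, (⟪x, ν⟫ : ℝ) ≤ ⟪y, ν⟫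

/-- Support function of a set. -/
def suppFn (K : Set (E n)) (x : E n) : ℝ := (⨆ y ∈ K, ((⟪y, x⟫ : ℝ) : EReal)).toReal

/-- Infimal convolution. -/
def infConv (u v : E n → EReal) (x : E n) : EReal := ⨅ y : E n, u y + v (x - y)

/-- Epi-multiplication t ⊡ v. -/
def epiMul (t : ℝ) (v : E n → EReal) : E n → EReal :=
  if t = 0 then fun x => if x = 0 then (0 : EReal) else ⊤
  else fun x => (t : EReal) * v (t⁻¹ • x)

/-- Convex indicator function of a set. -/
def indicatorE (A : Set (E n)) : E n → EReal := fun x => if x ∈ A then (0 : EReal) else ⊤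

/-- ζ ∈ C_rec(ℝⁿ), with (1-homogeneously extended) recession function ρ. -/
structure IsCRec (ζ ρ : E n → ℝ) : Prop where
  cont : Continuous ζ
  rec_cont : Continuous ρ
  rec_zero : ρ 0 = 0
  rec_homog : ∀ c : ℝ, 0 ≤ c → ∀ x, ρ (c • x) = c * ρ x
  rec_lim : ∀ ν : E n, ‖ν‖ = 1 → Tendsto (fun t : ℝ => ζ (t • ν) / t) atTop (𝓝 (ρ ν))
  diff_bdd : ∃ C : ℝ, ∀ x, |ρ x - ζ x| ≤ C

/-- Wulff shape of f : S^{n-1} → ℝ. -/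
def wulff (f : E n → ℝ) : Set (E n) := ⋂ ν ∈ sphere (0 : E n) 1, {x : E n | (⟪x, ν⟫ : ℝ) ≤ f ν}

/-- Lower boundary function ⌊K⌋ of a subset of ℝ^{n+1}. -/
def lfloor (K : Set (E (n + 1))) (x : E n) : EReal := ⨅ t ∈ {t : ℝ | pairE x t ∈ K}, (t : EReal)

/-- M_u, the maximum of u over its domain. -/
def maxVal (u : E n → EReal) : ℝ := sSup ((fun x => (u x).toReal) '' dom u)

/-- The body K^u = (epi(u - M_u) ∩ R_H(epi(u - M_u))) + M_u e_{n+1}. -/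
def Ku (u : E n → EReal) : Set (E (n + 1)) :=
  (fun X => X + pairE (0 : E n) (maxVal u)) ''
    ({X : E (n + 1) | u (fstE X) ≤ ((sndE X + maxVal u : ℝ) : EReal)} ∩
      reflH '' {X : E (n + 1) | u (fstE X) ≤ ((sndE X + maxVal u : ℝ) : EReal)})

/-- The vertical segment ℓ_s = {r e_{n+1} : r ∈ [0, s]}. -/
def segZ (n : ℕ) (s : ℝ) : Set (E (n + 1)) := (fun r : ℝ => pairE (0 : E n) r) '' Icc 0 s

/-- Gnomonic projection. -/
def gnom (ν : E (n + 1)) : E n := (sndE ν)⁻¹ • fstE ν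

/-- The function ζ̄ on Sⁿ built from ζ and its recession function ρ. -/
def zbar (ζ ρ : E n → ℝ) (ν : E (n + 1)) : ℝ :=
  if sndE ν < 0 then ζ (gnom ν) / Real.sqrt (1 + ‖gnom ν‖ ^ 2)
  else if 0 < sndE ν then ζ (gnom (reflH ν)) / Real.sqrt (1 + ‖gnom (reflH ν)‖ ^ 2)
  else ρ (fstE ν)

/-- Weighted surface area measure S_{μ,K}, realized via a choice of Gauss map N. -/
def surfMeas (w : E (n + 1) → ℝ) (K : Set (E (n + 1))) (N : E (n + 1) → E (n + 1)) :
    Measure (E (n + 1)) :=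
  Measure.map N (((μH[(n : ℝ)]).restrict (frontier K)).withDensity fun X => ENNReal.ofReal (w X))

/-- φ evaluated at a ∈ EReal (0 at +∞). -/
def phiE (φ : ℝ → ℝ) (a : EReal) : ℝ := if a = ⊤ then 0 else φ a.toReal

/-- Φ(a) = ∫_a^{+∞} φ(z) dz, extended by 0 at a = +∞. -/
def PhiE (φ : ℝ → ℝ) (a : EReal) : ℝ := if a = ⊤ then 0 else ∫ z in Ici a.toReal, φ z

/-- Standard Gaussian density on ℝ^m. -/
def gaussDensity (m : ℕ) (X : E m) : ℝ :=
  (2 * Real.pi) ^ (-(m : ℝ) / 2) * Real.exp (-(‖X‖ ^ 2 / 2))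

/-- Standard Gaussian measure on ℝ^m. -/
def gaussMeas (m : ℕ) : Measure (E m) :=
  volume.withDensity fun X => ENNReal.ofReal (gaussDensity m X)

/-- Gaussian symmetric-difference distance. -/
def dGauss {m : ℕ} (K L : Set (E m)) : ℝ := (gaussMeas m (symmDiff K L)).toReal

/-- The class K^{n+1}_+. -/
def KPlus (n : ℕ) : Set (Set (E (n + 1))) :=
  {K | Convex ℝ K ∧ IsClosed K ∧ (interior K).Nonempty ∧
    IsCompact (fstE '' K) ∧ Convex ℝ (fstE '' K) ∧ (interior (fstE '' K)).Nonempty}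

/-- Epi-convergence of a sequence of functions. -/
def EpiConverges (um : ℕ → E n → EReal) (u : E n → EReal) : Prop :=
  ∀ x : E n,
    (∀ xs : ℕ → E n, Tendsto xs atTop (𝓝 x) →
      u x ≤ Filter.liminf (fun m => um m (xs m)) atTop) ∧
    ∃ xs : ℕ → E n, Tendsto xs atTop (𝓝 x) ∧
      Tendsto (fun m => um m (xs m)) atTop (𝓝 (u x))

/-! Near the direction `e`, the boundary of a convex body is a Lipschitz graph over `e^⊥`, so by
Rademacher's theorem almost every boundary point has a single outer unit normal. Outer normals
depend upper semicontinuously on the pair (body, boundary point), and at points with a single normal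
this is continuity. Weak convergence of the normals as functions on the boundaries therefore
reduces to weak convergence of the boundary measures, which holds because the boundary measure is
continuous in the Hausdorff metric: the nearest point projection is a contraction, and nearby
bodies are nested between homothetic copies of each other.

When `q < n` the weight is singular along the vertical line through the origin. That line passes
through an interior point of `K`, so it meets the boundary only where the surface is a graph over
`H` whose slopes are bounded uniformly in `m`; the weighted area near the line is then dominated by
the integral of `|x|^(q-n)` over a small ball of `ℝⁿ`, and the weight may be truncated there at an
arbitrarily small uniform cost. The volumes converge by dominated convergence.
-/

section OuterNormals

variable {V : Type*} [NormedAddCommGroup V] [InnerProductSpace ℝ V]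

/-- The outer unit normals of `K` at `Y`, i.e. the intersection of the normal cone with the unit
sphere. The definition does not ask that `Y` lie in `K`. -/
def outerNormals (K : Set V) (Y : V) : Set V :=
  {ν | ‖ν‖ = 1 ∧ ∀ x ∈ K, ⟪x, ν⟫ ≤ ⟪Y, ν⟫}

lemma outerNormals_nonempty [CompleteSpace V] {K : Set V} (hK : Convex ℝ K)
    (hi : (interior K).Nonempty) {Y : V} (hY : Y ∉ interior K) : (outerNormals K Y).Nonempty := by
  obtain ⟨f, hf⟩ := geometric_hahn_banach_open_point hK.interior isOpen_interior hY
  have hle : ∀ x ∈ K, f x ≤ f Y := fun x hx => by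
    have hx' : x ∈ closure (interior K) := by
      rw [hK.closure_interior_eq_closure_of_nonempty_interior hi]
      exact subset_closure hx
    exact closure_minimal (fun a ha => (hf a ha).le) (isClosed_le f.continuous continuous_const) hx'
  set v := (InnerProductSpace.toDual ℝ V).symm f with hv
  have hfv : ∀ x, f x = ⟪x, v⟫ := fun x => by
    rw [real_inner_comm, hv, InnerProductSpace.toDual_symm_apply]
  have hv0 : v ≠ 0 := fun h0 => by
    obtain ⟨a, ha⟩ := hi
    simpa only [hfv, h0, inner_zero_right, lt_irrefl] using hf a ha
  refine ⟨‖v‖⁻¹ • v, norm_smul_inv_norm (𝕜 := ℝ) hv0, fun x hx => ?_⟩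
  rw [real_inner_smul_right, real_inner_smul_right, ← hfv, ← hfv]
  exact mul_le_mul_of_nonneg_left (hle x hx) (inv_nonneg.2 (norm_nonneg v))

lemma le_inner_sub_of_closedBall_subset {K : Set V} {p Y ν : V} {ρ : ℝ} (hρ : 0 ≤ ρ)
    (hb : closedBall p ρ ⊆ K) (hν : ν ∈ outerNormals K Y) : ρ ≤ ⟪Y - p, ν⟫ := by
  have hmem : p + ρ • ν ∈ closedBall p ρ := by
    rw [mem_closedBall, dist_eq_norm, add_sub_cancel_left, norm_smul, hν.1, mul_one,
      Real.norm_of_nonneg hρ]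
  have h := hν.2 _ (hb hmem)
  rw [inner_add_left, real_inner_smul_left, real_inner_self_eq_norm_sq, hν.1] at h
  rw [inner_sub_left]
  linarith

lemma mem_outerNormals_iff_infDist {K : Set V} (hK : IsCompact K) (hne : K.Nonempty) {Y ν : V} :
    ν ∈ outerNormals K Y ↔ ‖ν‖ = 1 ∧ ∀ x, ⟪x, ν⟫ ≤ ⟪Y, ν⟫ + infDist x K := by
  refine and_congr_right fun hν => ⟨fun h x => ?_, fun h x hx => ?_⟩
  · obtain ⟨y, hy, hxy⟩ := hK.exists_infDist_eq_dist hne x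
    have hyν := h y hy
    have hle : ⟪x - y, ν⟫ ≤ dist x y := by
      simpa only [hν, mul_one, dist_eq_norm] using real_inner_le_norm (x - y) ν
    rw [inner_sub_left] at hle
    linarith
  · simpa only [infDist_zero_of_mem hx, add_zero] using h x

end OuterNormals

section ConvexBodies

variable {V : Type*} [NormedAddCommGroup V]

lemma continuous_infDist_convexBody [NormedSpace ℝ V] (x : V) :
    Continuous fun K : ConvexBody V => infDist x (K : Set V) := by
  refine (LipschitzWith.of_le_add_mul 1 fun K L => ?_).continuous
  rw [NNReal.coe_one, one_mul, ← ConvexBody.hausdorffDist_coe, hausdorffDist_comm]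
  exact infDist_le_infDist_add_hausdorffDist ConvexBody.hausdorffEDist_ne_top

lemma eventually_subset_thickening [NormedSpace ℝ V] (K : ConvexBody V) {δ : ℝ} (hδ : 0 < δ) :
    ∀ᶠ L : ConvexBody V in 𝓝 K,
      (L : Set V) ⊆ thickening δ K ∧ (K : Set V) ⊆ thickening δ (L : Set V) := by
  filter_upwards [ball_mem_nhds K hδ] with L hL
  rw [mem_ball, ← ConvexBody.hausdorffDist_coe] at hL
  refine ⟨fun x hx => ?_, fun x hx => ?_⟩
  · exact mem_thickening_iff.2
      (exists_dist_lt_of_hausdorffDist_lt hx hL ConvexBody.hausdorffEDist_ne_top)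
  · rw [hausdorffDist_comm] at hL
    exact mem_thickening_iff.2
      (exists_dist_lt_of_hausdorffDist_lt hx hL ConvexBody.hausdorffEDist_ne_top)

variable [InnerProductSpace ℝ V]

lemma isClosed_mem_outerNormals :
    IsClosed {z : (ConvexBody V × V) × V | z.2 ∈ outerNormals (z.1.1 : Set V) z.1.2} := by
  simp only [mem_outerNormals_iff_infDist (ConvexBody.isCompact _) (ConvexBody.nonempty _),
    ofPred_and, ofPred_forall]
  refine (isClosed_eq (by fun_prop) continuous_const).inter (isClosed_iInter fun x => ?_)
  have hdist := (continuous_infDist_convexBody x).comp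
    (continuous_fst.comp continuous_fst : Continuous fun z : (ConvexBody V × V) × V => z.1.1)
  exact isClosed_le (by fun_prop) (.add (by fun_prop) hdist)

lemma eventually_outerNormals_subset [ProperSpace V] {K : ConvexBody V} {X : V} {U : Set V}
    (hU : IsOpen U) (h : outerNormals (K : Set V) X ⊆ U) :
    ∀ᶠ q : ConvexBody V × V in 𝓝 (K, X), outerNormals (q.1 : Set V) q.2 ⊆ U := by
  have hev : ∀ᶠ q : ConvexBody V × V in 𝓝 (K, X),
      ∀ ν ∈ sphere (0 : V) 1 \ U, ν ∉ outerNormals (q.1 : Set V) q.2 :=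
    ((isCompact_sphere 0 1).diff hU).eventually_forall_of_forall_eventually fun ν hν =>
      isClosed_mem_outerNormals.isOpen_compl.mem_nhds fun hmem => hν.2 (h hmem)
  filter_upwards [hev] with q hq ν hν
  by_contra hνU
  exact hq ν ⟨mem_sphere_zero_iff_norm.2 hν.1, hνU⟩ hν

end ConvexBodies

section HausdorffMeasure

variable {X Y : Type*} [EMetricSpace X] [MeasurableSpace X] [BorelSpace X]
  [EMetricSpace Y] [MeasurableSpace Y] [BorelSpace Y]

lemma hausdorffMeasure_le_of_antilipschitzWith_domRestrict {f : X → Y} {A : Set X}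
    {c : ℝ≥0} {d : ℝ} (hd : 0 ≤ d) (hf : AntilipschitzWith c (A.domRestrict f)) :
    μH[d] A ≤ (c : ℝ≥0∞) ^ d * μH[d] (f '' A) := by
  have h := hf.le_hausdorffMeasure_image hd univ
  rwa [image_univ, range_domRestrict, ← isometry_subtype_coe.hausdorffMeasure_image (Or.inl hd),
    image_univ, Subtype.range_coe] at h

end HausdorffMeasure

section NormalRays

variable {V : Type*} [NormedAddCommGroup V] [InnerProductSpace ℝ V]

lemma dist_le_dist_add_smul_outerNormals {C : Set V} {x y ν ν' : V} (hx : x ∈ C) (hy : y ∈ C)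
    (hν : ν ∈ outerNormals C x) (hν' : ν' ∈ outerNormals C y) {t t' : ℝ} (ht : 0 ≤ t)
    (ht' : 0 ≤ t') : dist x y ≤ dist (x + t • ν) (y + t' • ν') := by
  have h₁ : 0 ≤ ⟪x - y, ν⟫ := by rw [inner_sub_left]; linarith [hν.2 y hy]
  have h₂ : ⟪x - y, ν'⟫ ≤ 0 := by rw [inner_sub_left]; linarith [hν'.2 x hx]
  have hsq : ‖x - y‖ * ‖x - y‖ ≤ ‖x - y‖ * ‖(x + t • ν) - (y + t' • ν')‖ := calc
    ‖x - y‖ * ‖x - y‖ = ⟪x - y, x - y⟫ := (real_inner_self_eq_norm_mul_norm _).symm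
    _ ≤ ⟪x - y, x - y⟫ + t * ⟪x - y, ν⟫ - t' * ⟪x - y, ν'⟫ := by
      linarith [mul_nonneg ht h₁, mul_nonneg ht' (neg_nonneg.2 h₂)]
    _ = ⟪x - y, (x + t • ν) - (y + t' • ν')⟫ := by
      rw [add_sub_add_comm, inner_add_right, inner_sub_right (x - y) (t • ν),
        real_inner_smul_right, real_inner_smul_right]
      ring
    _ ≤ ‖x - y‖ * ‖(x + t • ν) - (y + t' • ν')‖ := real_inner_le_norm _ _
  rw [dist_eq_norm, dist_eq_norm]
  rcases (norm_nonneg (x - y)).eq_or_lt with h0 | h0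
  · rw [← h0]
    exact norm_nonneg _
  · exact le_of_mul_le_mul_left hsq h0

lemma exists_add_smul_mem_frontier {C L : Set V} {Z ν : V} {δ : ℝ} (hL : IsClosed L)
    (hLC : L ⊆ thickening δ C) (hZ : Z ∈ L) (hν : ν ∈ outerNormals C Z) :
    ∃ t, 0 ≤ t ∧ t < δ ∧ Z + t • ν ∈ frontier L := by
  have hδ : 0 < δ := by
    obtain ⟨y, -, hy⟩ := mem_thickening_iff.1 (hLC hZ)
    exact dist_nonneg.trans_lt hy
  have hend : Z + δ • ν ∉ L := fun h => by
    obtain ⟨y, hyC, hy⟩ := mem_thickening_iff.1 (hLC h)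
    have hle := (real_inner_le_norm (Z + δ • ν - y) ν).trans_eq (by rw [hν.1, mul_one])
    rw [dist_eq_norm] at hy
    rw [inner_sub_left, inner_add_left, real_inner_smul_left, real_inner_self_eq_norm_sq,
      hν.1] at hle
    linarith [hν.2 y hyC]
  have : PreconnectedSpace (Icc 0 δ) := Subtype.preconnectedSpace isPreconnected_Icc
  have hray : Continuous fun t : Icc 0 δ => Z + (t : ℝ) • ν := by fun_prop
  have hfrontier : (frontier ((fun t : Icc 0 δ => Z + (t : ℝ) • ν) ⁻¹' L)).Nonempty := by
    refine nonempty_frontier_iff.2 ⟨⟨⟨0, left_mem_Icc.2 hδ.le⟩, ?_⟩, fun huniv => hend ?_⟩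
    · simpa only [mem_preimage, zero_smul, add_zero] using hZ
    · exact eq_univ_iff_forall.1 huniv ⟨δ, right_mem_Icc.2 hδ.le⟩
  obtain ⟨⟨t, ht⟩, hmem⟩ := hfrontier
  have htL : Z + t • ν ∈ frontier L := hray.frontier_preimage_subset L hmem
  refine ⟨t, ht.1, ht.2.lt_of_ne fun htδ => hend ?_, htL⟩
  exact htδ ▸ hL.frontier_subset htL

-- Follow an outer normal ray of `C` from each point of `A` to `∂L`: this expands distances.
lemma hausdorffMeasure_le_of_subset_thickening [CompleteSpace V] [MeasurableSpace V] [BorelSpace V]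
    {C L A : Set V} {δ d : ℝ} (hd : 0 ≤ d) (hC : Convex ℝ C) (hCc : IsClosed C)
    (hCi : (interior C).Nonempty) (hL : IsClosed L) (hCL : C ⊆ L) (hLC : L ⊆ thickening δ C)
    (hA : A ⊆ frontier C) : μH[d] A ≤ μH[d] (frontier L ∩ thickening δ A) := by
  have hAC : A ⊆ C := hA.trans hCc.frontier_subset
  have hnormal : ∀ Z ∈ A, ∃ ν, ν ∈ outerNormals C Z := fun Z hZ =>
    outerNormals_nonempty hC hCi (hA hZ).2
  choose! ν hν using hnormal
  have hray : ∀ Z ∈ A, ∃ t, 0 ≤ t ∧ t < δ ∧ Z + t • ν Z ∈ frontier L := fun Z hZ =>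
    exists_add_smul_mem_frontier hL hLC (hCL (hAC hZ)) (hν Z hZ)
  choose! t ht htδ htL using hray
  have hanti : AntilipschitzWith 1 (A.domRestrict fun Z => Z + t Z • ν Z) := by
    refine AntilipschitzWith.of_le_mul_dist fun x y => ?_
    rw [NNReal.coe_one, one_mul]
    exact dist_le_dist_add_smul_outerNormals (hAC x.2) (hAC y.2) (hν x x.2) (hν y y.2)
      (ht x x.2) (ht y y.2)
  have himage : (fun Z => Z + t Z • ν Z) '' A ⊆ frontier L ∩ thickening δ A := by
    rintro - ⟨Z, hZ, rfl⟩
    refine ⟨htL Z hZ, mem_thickening_iff.2 ⟨Z, hZ, ?_⟩⟩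
    rw [dist_eq_norm, add_sub_cancel_left, norm_smul, (hν Z hZ).1, mul_one,
      Real.norm_of_nonneg (ht Z hZ)]
    exact htδ Z hZ
  calc μH[d] A ≤ (1 : ℝ≥0) ^ d * μH[d] ((fun Z => Z + t Z • ν Z) '' A) :=
        hausdorffMeasure_le_of_antilipschitzWith_domRestrict hd hanti
    _ ≤ μH[d] (frontier L ∩ thickening δ A) := by
        rw [ENNReal.coe_one, ENNReal.one_rpow, one_mul]
        exact measure_mono himage

end NormalRays

section Thickening

lemma mem_thickening_of_dist_le {X : Type*} [PseudoMetricSpace X] {x y : X} {r η : ℝ} {B : Set X}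
    (hxy : dist x y ≤ η) (hy : y ∈ thickening r B) : x ∈ thickening (r + η) B := by
  obtain ⟨b, hb, hyb⟩ := mem_thickening_iff.1 hy
  exact mem_thickening_iff.2 ⟨b, hb, by linarith [dist_triangle x y b]⟩

variable {V : Type*} [NormedAddCommGroup V] [NormedSpace ℝ V]

lemma mem_closure_of_closedBall_subset_thickening {L : Set V} (hL : Convex ℝ L) {Z : V} {r : ℝ}
    (hr : 0 < r) (h : closedBall Z r ⊆ thickening r L) : Z ∈ closure L := by
  by_contra hZ
  obtain ⟨f, u, hfL, hfZ⟩ := geometric_hahn_banach_closed_point hL.closure isClosed_closure hZ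
  have hupper : ∀ v ∈ closedBall (0 : V) r, f v ≤ u - f Z + ‖f‖ * r := fun v hv => by
    have hmem : Z + v ∈ closedBall Z r := by
      rwa [mem_closedBall, dist_self_add_left, ← mem_closedBall_zero_iff]
    obtain ⟨y, hy, hlt⟩ := mem_thickening_iff.1 (h hmem)
    rw [dist_eq_norm] at hlt
    have hle := (le_abs_self _).trans ((f.le_opNorm (Z + v - y)).trans
      (mul_le_mul_of_nonneg_left hlt.le (norm_nonneg f)))
    rw [map_sub, map_add] at hle
    linarith [hfL y (subset_closure hy)]
  have hnorm : ‖f‖ ≤ (u - f Z + ‖f‖ * r) / r := by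
    refine f.opNorm_bound_of_ball_bound hr _ fun v hv => ?_
    rw [Real.norm_eq_abs, abs_le, neg_le, ← map_neg]
    exact ⟨hupper (-v) (by rwa [mem_closedBall_zero_iff, norm_neg, ← mem_closedBall_zero_iff]),
      hupper v hv⟩
  rw [le_div_iff₀ hr] at hnorm
  linarith

lemma homothety_mapsTo_of_subset_thickening {K L : Set V} (hL : Convex ℝ L) {p : V} {ρ c : ℝ}
    (hb : closedBall p ρ ⊆ L) (hc₀ : 0 < c) (hc₁ : c < 1)
    (hKL : K ⊆ thickening ((1 - c) * ρ) L) : MapsTo (AffineMap.homothety p c) K L := by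
  intro k hk
  obtain ⟨l, hl, hkl⟩ := mem_thickening_iff.1 (hKL hk)
  have h1c : 0 < 1 - c := sub_pos.2 hc₁
  have hball : p + (c / (1 - c)) • (k - l) ∈ closedBall p ρ := by
    rw [mem_closedBall, dist_self_add_left, norm_smul, Real.norm_of_nonneg (by positivity),
      ← dist_eq_norm, div_mul_eq_mul_div, div_le_iff₀ h1c, mul_comm ρ]
    exact (mul_le_of_le_one_left dist_nonneg hc₁.le).trans hkl.le
  have hcomb : AffineMap.homothety p c k = c • l + (1 - c) • (p + (c / (1 - c)) • (k - l)) := by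
    rw [smul_add, smul_smul, mul_div_cancel₀ _ h1c.ne', AffineMap.homothety_apply, vsub_eq_sub,
      vadd_eq_add]
    module
  rw [hcomb]
  exact hL hl (hb hball) hc₀.le h1c.le (add_sub_cancel c 1)

lemma exists_eventually_closedBall_subset_convexBody {K : ConvexBody V} {p : V}
    (hp : p ∈ interior (K : Set V)) : ∃ ρ R : ℝ, 0 < ρ ∧ 0 < R ∧
      ∀ᶠ L : ConvexBody V in 𝓝 K, closedBall p ρ ⊆ (L : Set V) ∧ (L : Set V) ⊆ closedBall p R := by
  obtain ⟨ρ, hρ, hKρ⟩ := nhds_basis_closedBall.mem_iff.1 (mem_interior_iff_mem_nhds.1 hp)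
  obtain ⟨R, hR, hKR⟩ := K.isBounded.subset_closedBall_lt 0 p
  refine ⟨ρ / 2, R + ρ, by positivity, by positivity, ?_⟩
  filter_upwards [eventually_subset_thickening K (half_pos hρ)] with L hL
  constructor
  · intro Z hZ
    have hsub : closedBall Z (ρ / 2) ⊆ thickening (ρ / 2) (L : Set V) := by
      refine ((closedBall_subset_closedBall' ?_).trans hKρ).trans hL.2
      linarith [mem_closedBall.1 hZ]
    have hcl := mem_closure_of_closedBall_subset_thickening L.convex (half_pos hρ) hsub
    rwa [L.isClosed.closure_eq] at hcl
  · intro Z hZ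
    obtain ⟨k, hk, hZk⟩ := mem_thickening_iff.1 (hL.1 hZ)
    rw [mem_closedBall]
    linarith [dist_triangle Z k p, mem_closedBall.1 (hKR hk)]

end Thickening

section FrontierMeasure

variable {V : Type*} [NormedAddCommGroup V] [InnerProductSpace ℝ V] [MeasurableSpace V]
  [BorelSpace V] [CompleteSpace V]

lemma hausdorffMeasure_le_homothety {K L A : Set V} {p : V} {ρ R c d : ℝ}
    (hd : 0 ≤ d) (hK : Convex ℝ K) (hKc : IsClosed K) (hKi : (interior K).Nonempty)
    (hL : Convex ℝ L) (hLc : IsClosed L) (hb : closedBall p ρ ⊆ L) (hR : L ⊆ closedBall p R)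
    (hc₀ : 0 < c) (hc₁ : c < 1) (hKL : K ⊆ thickening ((1 - c) * ρ) L)
    (hLK : L ⊆ thickening ((1 - c) * ρ) K) (hA : A ⊆ frontier K) :
    μH[d] A ≤
      ‖c‖₊⁻¹ ^ d • μH[d] (frontier L ∩ thickening ((1 - c) * (ρ + 2 * (R / c))) A) := by
  set g : V →ᵃ[ℝ] V := AffineMap.homothety p c with hg
  have hgc : Continuous g := AffineMap.homothety_continuous p c
  set η := (1 - c) * (R / c) with hη
  have hdist : ∀ x ∈ g ⁻¹' L, dist x (g x) ≤ η := fun x hx => by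
    have hgx := mem_closedBall.1 (hR hx)
    rw [hg, dist_homothety_center, Real.norm_of_nonneg hc₀.le, mul_comm,
      ← le_div_iff₀ hc₀] at hgx
    rw [hg, dist_self_homothety, Real.norm_of_nonneg (sub_nonneg.2 hc₁.le)]
    exact mul_le_mul_of_nonneg_left hgx (sub_nonneg.2 hc₁.le)
  have hsub : g ⁻¹' L ⊆ thickening ((1 - c) * ρ + η) K := fun x hx =>
    mem_thickening_of_dist_le (hdist x hx) (hLK hx)
  have hexpand := hausdorffMeasure_le_of_subset_thickening hd hK hKc hKi (hLc.preimage hgc)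
    (homothety_mapsTo_of_subset_thickening hL hb hc₀ hc₁ hKL) hsub hA
  refine hexpand.trans ?_
  rw [← hausdorffMeasure_homothety_preimage hd p hc₀.ne',
    ← (AffineMap.homothety_isOpenMap p c hc₀.ne').preimage_frontier_eq_frontier_preimage hgc]
  refine measure_mono fun x ⟨hxL, hxA⟩ => ⟨hxL, ?_⟩
  have hgx := mem_thickening_of_dist_le
    ((dist_comm _ _).trans_le (hdist x (hLc.frontier_subset hxL))) hxA
  rwa [show (1 - c) * (ρ + 2 * (R / c)) = (1 - c) * ρ + η + η by rw [hη]; ring]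

lemma eventually_hausdorffMeasure_frontier_le {K : ConvexBody V}
    (hK : (interior (K : Set V)).Nonempty) {d : ℝ} (hd : 0 ≤ d) {δ : ℝ} (hδ : 0 < δ) {C : ℝ≥0}
    (hC : 1 < C) : ∀ᶠ L : ConvexBody V in 𝓝 K,
      (∀ A ⊆ frontier (K : Set V), μH[d] A ≤ C • μH[d] (frontier (L : Set V) ∩ thickening δ A)) ∧
      μH[d] (frontier (L : Set V)) ≤ C • μH[d] (frontier (K : Set V)) := by
  obtain ⟨p, hp⟩ := hK
  obtain ⟨ρ, R, hρ, -, hballs⟩ := exists_eventually_closedBall_subset_convexBody hp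
  have hfactor : ∀ᶠ c in 𝓝[<] (1 : ℝ), 0 < c ∧ c < 1 ∧ ‖c‖₊⁻¹ ^ d < C ∧
      (1 - c) * (ρ + 2 * (R / c)) < δ := by
    have h₁ : ContinuousAt (fun c : ℝ => ‖c‖₊⁻¹ ^ d) 1 :=
      (NNReal.continuous_rpow_const hd).continuousAt.comp
        (continuous_nnnorm.continuousAt.inv₀ (by norm_num))
    have h₂ : ContinuousAt (fun c : ℝ => (1 - c) * (ρ + 2 * (R / c))) 1 := by
      fun_prop (disch := norm_num)
    filter_upwards [self_mem_nhdsWithin, nhdsWithin_le_nhds (lt_mem_nhds one_pos),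
      nhdsWithin_le_nhds (h₁.eventually_lt continuousAt_const (by simpa using hC)),
      nhdsWithin_le_nhds (h₂.eventually_lt continuousAt_const (by simpa using hδ))]
      with c hc₁ hc₀ hcC hcδ
    exact ⟨hc₀, hc₁, hcC, hcδ⟩
  obtain ⟨c, hc₀, hc₁, hcC, hcδ⟩ := hfactor.exists
  filter_upwards [hballs,
    eventually_subset_thickening K (mul_pos (sub_pos.2 hc₁) hρ)] with L hL hKL
  have hKb := hballs.self_of_nhds
  have hpL : p ∈ interior (L : Set V) := mem_interior_iff_mem_nhds.2
    (mem_of_superset (closedBall_mem_nhds p hρ) hL.1)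
  constructor
  · intro A hA
    calc μH[d] A ≤ ‖c‖₊⁻¹ ^ d •
          μH[d] (frontier (L : Set V) ∩ thickening ((1 - c) * (ρ + 2 * (R / c))) A) :=
        hausdorffMeasure_le_homothety hd K.convex K.isClosed ⟨p, hp⟩ L.convex L.isClosed hL.1 hL.2
          hc₀ hc₁ hKL.2 hKL.1 hA
      _ ≤ C • μH[d] (frontier (L : Set V) ∩ thickening δ A) := by gcongr
  · calc μH[d] (frontier (L : Set V)) ≤ ‖c‖₊⁻¹ ^ d • μH[d] (frontier (K : Set V) ∩
          thickening ((1 - c) * (ρ + 2 * (R / c))) (frontier (L : Set V))) :=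
        hausdorffMeasure_le_homothety hd L.convex L.isClosed ⟨p, hpL⟩ K.convex K.isClosed hKb.1
          hKb.2 hc₀ hc₁ hKL.1 hKL.2 subset_rfl
      _ ≤ C • μH[d] (frontier (K : Set V)) := by
        gcongr
        exact inter_subset_left

lemma exists_one_lt_smul_lt {a b : ℝ≥0∞} (hab : a < b) : ∃ C : ℝ≥0, 1 < C ∧ C • a < b := by
  have hcont : ContinuousAt (fun C : ℝ≥0 => C • a) 1 := by
    have := (ENNReal.continuous_mul_const hab.ne_top).comp ENNReal.continuous_coe
    exact this.continuousAt
  have hev : ∀ᶠ C : ℝ≥0 in 𝓝[>] 1, C • a < b := eventually_nhdsWithin_of_eventually_nhds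
    (hcont.eventually_lt continuousAt_const (by simpa only [one_smul] using hab))
  obtain ⟨C, hC, hCab⟩ := (eventually_mem_nhdsWithin.and hev).exists
  exact ⟨C, hC, hCab⟩

theorem lowerSemicontinuousAt_hausdorffMeasure_frontier_inter {K : ConvexBody V}
    (hK : (interior (K : Set V)).Nonempty) {d : ℝ} (hd : 0 ≤ d) {U : Set V} (hU : IsOpen U) :
    LowerSemicontinuousAt (fun L : ConvexBody V => μH[d] (frontier (L : Set V) ∩ U)) K := by
  intro y hy
  obtain ⟨F, hFc, hFU, hFun, hFmono⟩ := hU.exists_iUnion_isClosed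
  have hexhaust : μH[d] (frontier (K : Set V) ∩ U) = ⨆ j, μH[d] (frontier (K : Set V) ∩ F j) := by
    rw [← hFun, inter_iUnion]
    exact Monotone.measure_iUnion fun i j hij => inter_subset_inter_right _ (hFmono hij)
  obtain ⟨j, hj⟩ := lt_iSup_iff.1 (lt_of_lt_of_eq hy hexhaust)
  have hcompact : IsCompact (frontier (K : Set V) ∩ F j) :=
    (K.isCompact.of_isClosed_subset isClosed_frontier
      K.isClosed.frontier_subset).inter_right (hFc j)
  obtain ⟨δ, hδ, hδU⟩ := hcompact.exists_thickening_subset_open hU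
    (inter_subset_right.trans (hFU j))
  obtain ⟨C, hC, hCy⟩ := exists_one_lt_smul_lt hj
  filter_upwards [eventually_hausdorffMeasure_frontier_le hK hd hδ hC] with L hL
  have hlt : C • y < C • μH[d] (frontier (L : Set V) ∩ U) := calc
    C • y < μH[d] (frontier (K : Set V) ∩ F j) := hCy
    _ ≤ C • μH[d] (frontier (L : Set V) ∩ thickening δ (frontier (K : Set V) ∩ F j)) :=
      hL.1 _ inter_subset_left
    _ ≤ C • μH[d] (frontier (L : Set V) ∩ U) := by gcongr
  by_contra hle
  exact hlt.not_ge (by gcongr; exact not_lt.1 hle)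

lemma upperSemicontinuousAt_hausdorffMeasure_frontier {K : ConvexBody V}
    (hK : (interior (K : Set V)).Nonempty) {d : ℝ} (hd : 0 ≤ d) :
    UpperSemicontinuousAt (fun L : ConvexBody V => μH[d] (frontier (L : Set V))) K := by
  intro y hy
  obtain ⟨C, hC, hCy⟩ := exists_one_lt_smul_lt hy
  filter_upwards [eventually_hausdorffMeasure_frontier_le hK hd one_pos hC] with L hL
  exact hL.2.trans_lt hCy

theorem continuousAt_hausdorffMeasure_frontier {K : ConvexBody V}
    (hK : (interior (K : Set V)).Nonempty) {d : ℝ} (hd : 0 ≤ d) :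
    ContinuousAt (fun L : ConvexBody V => μH[d] (frontier (L : Set V))) K :=
  continuousAt_iff_lower_upperSemicontinuousAt.2
    ⟨by simpa only [inter_univ] using
        lowerSemicontinuousAt_hausdorffMeasure_frontier_inter hK hd isOpen_univ,
      upperSemicontinuousAt_hausdorffMeasure_frontier hK hd⟩

end FrontierMeasure

section NormalPatch

variable {V W : Type*} [NormedAddCommGroup V] [InnerProductSpace ℝ V]
  [NormedAddCommGroup W] [InnerProductSpace ℝ W]

/-- `x ↦ (⟪e, x⟫, P x)` preserves inner products, so that `P` plays the role of the orthogonal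
projection onto the hyperplane `e^⊥`; this lets `fstE` and `Submodule.orthogonalProjectionOnto` be
treated alike. -/
def IsOrthogonalSplitting (e : V) (P : V →L[ℝ] W) : Prop :=
  ∀ x y, ⟪x, y⟫ = ⟪e, x⟫ * ⟪e, y⟫ + ⟪P x, P y⟫

/-- The part of the boundary of `L` that looks in the direction `e`: the points of `L` having an
outer unit normal whose component along `e` is at least `c`. For `c > 0` it is a Lipschitz graph
over the hyperplane `e^⊥`. -/
def normalPatch (L : Set V) (e : V) (c : ℝ) : Set V :=
  {Y ∈ L | ∃ ν ∈ outerNormals L Y, c ≤ ⟪e, ν⟫}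

lemma isOrthogonalSplitting_orthogonalProjectionOnto {e : V} (he : ‖e‖ = 1) :
    IsOrthogonalSplitting e (ℝ ∙ e)ᗮ.orthogonalProjectionOnto := by
  intro x y
  have hdecomp : ∀ z, z = ⟪e, z⟫ • e + ((ℝ ∙ e)ᗮ.orthogonalProjectionOnto z : V) := fun z => by
    rw [← Submodule.starProjection_unit_singleton ℝ he]
    exact ((ℝ ∙ e).starProjection_add_starProjection_orthogonal z).symm
  have hperp : ∀ z, ⟪e, ((ℝ ∙ e)ᗮ.orthogonalProjectionOnto z : V)⟫ = 0 := fun z =>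
    Submodule.mem_orthogonal_singleton_iff_inner_right.1 (Subtype.coe_prop _)
  conv_lhs => rw [hdecomp x, hdecomp y]
  rw [inner_add_left, inner_add_right, inner_add_right, real_inner_smul_left, real_inner_smul_left,
    real_inner_smul_right, real_inner_smul_right, real_inner_self_eq_norm_sq, he, hperp,
    real_inner_comm e ((ℝ ∙ e)ᗮ.orthogonalProjectionOnto x : V), hperp, Submodule.coe_inner]
  ring

section

variable {e : V} {P : V →L[ℝ] W}

lemma IsOrthogonalSplitting.norm_sq (hP : IsOrthogonalSplitting e P) (x : V) :
    ‖x‖ ^ 2 = ⟪e, x⟫ ^ 2 + ‖P x‖ ^ 2 := by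
  rw [← real_inner_self_eq_norm_sq, ← real_inner_self_eq_norm_sq, hP x x, sq]

lemma IsOrthogonalSplitting.norm_apply_le (hP : IsOrthogonalSplitting e P) (x : V) :
    ‖P x‖ ≤ ‖x‖ :=
  (pow_le_pow_iff_left₀ (norm_nonneg _) (norm_nonneg _) two_ne_zero).1
    (hP.norm_sq x ▸ le_add_of_nonneg_left (sq_nonneg _))

lemma IsOrthogonalSplitting.norm_le (hP : IsOrthogonalSplitting e P) (x : V) :
    ‖x‖ ≤ |⟪e, x⟫| + ‖P x‖ := by
  refine abs_le_of_sq_le_sq' ?_ (by positivity) |>.2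
  rw [hP.norm_sq x, add_sq, sq_abs]
  linarith [mul_nonneg (mul_nonneg zero_le_two (abs_nonneg ⟪e, x⟫)) (norm_nonneg (P x))]

lemma IsOrthogonalSplitting.height_le (hP : IsOrthogonalSplitting e P) {L : Set V} {X Y ν : V}
    (hX : X ∈ L) (hν : ν ∈ outerNormals L Y) (hpos : 0 < ⟪e, ν⟫) :
    ⟪e, X⟫ ≤ ⟪e, Y⟫ - ⟪P X - P Y, ⟪e, ν⟫⁻¹ • P ν⟫ := by
  have h := hν.2 X hX
  rw [hP X ν, hP Y ν] at h
  rw [real_inner_smul_right, inner_sub_left, le_sub_iff_add_le', ← le_sub_iff_add_le,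
    inv_mul_le_iff₀ hpos]
  linarith

lemma IsOrthogonalSplitting.norm_slope_le (hP : IsOrthogonalSplitting e P) {ν : V} {c : ℝ}
    (hν : ‖ν‖ = 1) (hc : 0 < c) (hcν : c ≤ ⟪e, ν⟫) : ‖⟪e, ν⟫⁻¹ • P ν‖ ≤ c⁻¹ := by
  rw [norm_smul, norm_inv, Real.norm_of_nonneg (hc.le.trans hcν)]
  calc ⟪e, ν⟫⁻¹ * ‖P ν‖ ≤ c⁻¹ * 1 :=
        mul_le_mul (inv_anti₀ hc hcν) (hν ▸ hP.norm_apply_le ν) (norm_nonneg _) (by positivity)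
    _ = c⁻¹ := mul_one _

lemma IsOrthogonalSplitting.eq_of_slope_eq (hP : IsOrthogonalSplitting e P) {ν ν' : V}
    (hν : ‖ν‖ = 1) (hν' : ‖ν'‖ = 1) (hpos : 0 < ⟪e, ν⟫) (hpos' : 0 < ⟪e, ν'⟫)
    (h : ⟪e, ν⟫⁻¹ • P ν = ⟪e, ν'⟫⁻¹ • P ν') : ν = ν' := by
  have hsq : ∀ {μ : V}, ‖μ‖ = 1 → 0 < ⟪e, μ⟫ →
      1 = ⟪e, μ⟫ ^ 2 * (1 + ‖⟪e, μ⟫⁻¹ • P μ‖ ^ 2) := fun {μ} hμ hμe => by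
    rw [norm_smul, mul_pow, norm_inv, Real.norm_of_nonneg hμe.le, mul_add, inv_pow,
      mul_inv_cancel_left₀ (by positivity), mul_one, ← hP.norm_sq, hμ, one_pow]
  have hheight : ⟪e, ν⟫ = ⟪e, ν'⟫ := by
    have heq := (hsq hν hpos).symm.trans (hsq hν' hpos')
    rw [← h] at heq
    exact (pow_left_inj₀ hpos.le hpos'.le two_ne_zero).1
      (mul_right_cancel₀ (by positivity) heq)
  rw [hheight] at h
  have hproj : P ν = P ν' := smul_right_injective W (inv_ne_zero hpos'.ne') h
  have hzero := hP.norm_le (ν - ν')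
  rw [inner_sub_right, hheight, sub_self, abs_zero, map_sub, hproj, sub_self, norm_zero,
    add_zero] at hzero
  exact sub_eq_zero.1 (norm_le_zero_iff.1 hzero)

lemma IsOrthogonalSplitting.antilipschitzWith_normalPatch (hP : IsOrthogonalSplitting e P)
    (L : Set V) {c : ℝ} (hc : 0 < c) :
    AntilipschitzWith (c⁻¹ + 1).toNNReal ((normalPatch L e c).domRestrict P) := by
  have hheight : ∀ X ∈ L, ∀ Y ∈ normalPatch L e c, ⟪e, X - Y⟫ ≤ c⁻¹ * ‖P (X - Y)‖ := by
    rintro X hX Y ⟨-, ν, hν, hcν⟩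
    have hle := hP.height_le hX hν (hc.trans_le hcν)
    have hslope := (neg_le_of_abs_le (abs_real_inner_le_norm (P X - P Y) (⟪e, ν⟫⁻¹ • P ν)))
    have hbound := mul_le_mul_of_nonneg_left (hP.norm_slope_le hν.1 hc hcν)
      (norm_nonneg (P X - P Y))
    rw [inner_sub_right, map_sub, mul_comm]
    linarith
  refine AntilipschitzWith.of_le_mul_dist fun X Y => ?_
  rw [Real.coe_toNNReal _ (by positivity), Subtype.dist_eq, dist_eq_norm, domRestrict_apply,
    domRestrict_apply, dist_eq_norm, ← map_sub, add_one_mul]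
  refine (hP.norm_le _).trans (add_le_add_left (abs_le'.2 ⟨hheight _ X.2.1 _ Y.2, ?_⟩) _)
  rw [← inner_neg_right, neg_sub, ← norm_neg (P _), ← map_neg, neg_sub]
  exact hheight _ Y.2.1 _ X.2

variable [MeasurableSpace V] [BorelSpace V] [MeasurableSpace W] [BorelSpace W]

lemma IsOrthogonalSplitting.hausdorffMeasure_le_image (hP : IsOrthogonalSplitting e P) {L A : Set V}
    {c d : ℝ} (hc : 0 < c) (hd : 0 ≤ d) (hA : A ⊆ normalPatch L e c) :
    μH[d] A ≤ ENNReal.ofReal (c⁻¹ + 1) ^ d * μH[d] (P '' A) :=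
  hausdorffMeasure_le_of_antilipschitzWith_domRestrict hd fun x y =>
    hP.antilipschitzWith_normalPatch L hc ⟨x, hA x.2⟩ ⟨y, hA y.2⟩

lemma IsOrthogonalSplitting.map_restrict_normalPatch_le (hP : IsOrthogonalSplitting e P)
    (L : Set V) {c d : ℝ} (hc : 0 < c) (hd : 0 ≤ d) :
    (μH[d].restrict (normalPatch L e c)).map P ≤ ENNReal.ofReal (c⁻¹ + 1) ^ d • μH[d] := by
  refine Measure.le_iff.2 fun B hB => ?_
  rw [Measure.map_apply P.continuous.measurable hB,
    Measure.restrict_apply (P.continuous.measurable hB), Measure.smul_apply, smul_eq_mul]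
  refine (hP.hausdorffMeasure_le_image hc hd inter_subset_right).trans ?_
  gcongr
  exact (image_mono inter_subset_left).trans (image_preimage_subset _ _)

end

end NormalPatch

section Subgradients

variable {W : Type*} [NormedAddCommGroup W] [InnerProductSpace ℝ W]

lemma exists_lipschitzWith_of_subgradients {ι : Type*} {x a : ι → W} {h : ι → ℝ} {C : ℝ≥0}
    (ha : ∀ i, ‖a i‖ ≤ C) (hsub : ∀ i j, h i + ⟪x j - x i, a i⟫ ≤ h j) :
    ∃ φ : W → ℝ, LipschitzWith C φ ∧ ∀ i y, φ (x i) + ⟪y - x i, a i⟫ ≤ φ y := by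
  rcases isEmpty_or_nonempty ι with hι | hι
  · exact ⟨0, LipschitzWith.const' 0, fun i => hι.elim i⟩
  have hmove : ∀ y z i, h i + ⟪y - x i, a i⟫ ≤ h i + ⟪z - x i, a i⟫ + C * dist y z :=
    fun y z i => by
      have hle := (real_inner_le_norm (y - z) (a i)).trans
        (mul_le_mul_of_nonneg_left (ha i) (norm_nonneg _))
      rw [dist_eq_norm, ← sub_add_sub_cancel y z (x i), inner_add_left]
      linarith
  have hbdd : ∀ y, BddAbove (range fun i => h i + ⟪y - x i, a i⟫) := fun y => by
    obtain ⟨j⟩ := hι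
    refine ⟨h j + C * dist y (x j), forall_mem_range.2 fun i => (hmove y (x j) i).trans ?_⟩
    gcongr
    exact hsub i j
  have hvalue : ∀ i, ⨆ j, (h j + ⟪x i - x j, a j⟫) = h i := fun i =>
    le_antisymm (ciSup_le fun j => hsub j i) <| by
      simpa only [sub_self, inner_zero_left, add_zero] using le_ciSup (hbdd (x i)) i
  refine ⟨fun y => ⨆ i, (h i + ⟪y - x i, a i⟫), LipschitzWith.of_le_add_mul C fun y z => ?_,
    fun i y => ?_⟩
  · exact ciSup_le fun i => (hmove y z i).trans (by gcongr; exact le_ciSup (hbdd z) i)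
  · beta_reduce
    rw [hvalue i]
    exact le_ciSup (hbdd y) i

lemma innerSL_eq_fderiv_of_subgradient {φ : W → ℝ} {x a : W} (hφ : DifferentiableAt ℝ φ x)
    (ha : ∀ y, φ x + ⟪y - x, a⟫ ≤ φ y) : innerSL ℝ a = fderiv ℝ φ x := by
  have hmin : IsLocalMin (fun y => φ y - innerSL ℝ a y) x := Eventually.of_forall fun y => by
    have h := ha y
    rw [inner_sub_left, real_inner_comm a y, real_inner_comm a x] at h
    simp only [innerSL_apply_apply]
    linarith
  have hderiv := hφ.hasFDerivAt.sub (innerSL ℝ a).hasFDerivAt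
  exact (sub_eq_zero.1 (hmin.hasFDerivAt_eq_zero hderiv)).symm

lemma ae_subgradient_unique_of_lipschitzWith [FiniteDimensional ℝ W] [MeasurableSpace W]
    [BorelSpace W] {φ : W → ℝ} {C : ℝ≥0} (hφ : LipschitzWith C φ) (μ : Measure W)
    [μ.IsAddHaarMeasure] : ∀ᵐ x ∂μ, ∀ a b, (∀ y, φ x + ⟪y - x, a⟫ ≤ φ y) →
      (∀ y, φ x + ⟪y - x, b⟫ ≤ φ y) → a = b := by
  filter_upwards [hφ.ae_differentiableAt (μ := μ)] with x hx a b ha hb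
  refine ext_inner_right ℝ fun y => ?_
  simpa only [innerSL_apply_apply] using DFunLike.congr_fun
    ((innerSL_eq_fderiv_of_subgradient hx ha).trans (innerSL_eq_fderiv_of_subgradient hx hb).symm) y

end Subgradients

section Frontier

variable {V W : Type*} [NormedAddCommGroup V] [InnerProductSpace ℝ V]

lemma exists_unit_eventually_le_inner {L : Set V} (hL : (interior L).Nonempty) {Y : V}
    (hY : Y ∉ interior L) :
    ∃ e : V, ‖e‖ = 1 ∧ ∃ c : ℝ, 0 < c ∧ ∀ᶠ X in 𝓝 Y, ∀ ν ∈ outerNormals L X, c ≤ ⟪e, ν⟫ := by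
  obtain ⟨p, hp⟩ := hL
  obtain ⟨ρ, hρ, hb⟩ := nhds_basis_closedBall.mem_iff.1 (mem_interior_iff_mem_nhds.1 hp)
  have hne : Y - p ≠ 0 := sub_ne_zero.2 fun h => hY (h ▸ hp)
  have hYp : 0 < ‖Y - p‖ := norm_pos_iff.2 hne
  refine ⟨‖Y - p‖⁻¹ • (Y - p), norm_smul_inv_norm (𝕜 := ℝ) hne,
    ‖Y - p‖⁻¹ * (ρ / 2), by positivity, ?_⟩
  filter_upwards [closedBall_mem_nhds Y (half_pos hρ)] with X hX ν hν
  rw [real_inner_smul_left]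
  refine mul_le_mul_of_nonneg_left ?_ (inv_nonneg.2 hYp.le)
  have hXp := le_inner_sub_of_closedBall_subset hρ.le hb hν
  have hXY := real_inner_le_norm (X - Y) ν
  rw [hν.1, mul_one, ← dist_eq_norm] at hXY
  rw [← sub_add_sub_cancel X Y p, inner_add_left] at hXp
  linarith [mem_closedBall.1 hX]

variable [MeasurableSpace V] [BorelSpace V]

-- A boundary point with two normals in the patch gives two subgradients of one convex function at
-- its projection, so Rademacher's theorem applies.
lemma IsOrthogonalSplitting.hausdorffMeasure_setOf_ne [NormedAddCommGroup W]
    [InnerProductSpace ℝ W] [FiniteDimensional ℝ W] [MeasurableSpace W] [BorelSpace W] {e : V}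
    {P : V →L[ℝ] W} (hP : IsOrthogonalSplitting e P) (L : Set V) {c : ℝ} (hc : 0 < c) :
    μH[Module.finrank ℝ W] {Y ∈ L | ∃ ν ∈ outerNormals L Y, ∃ ν' ∈ outerNormals L Y,
      c ≤ ⟪e, ν⟫ ∧ c ≤ ⟪e, ν'⟫ ∧ ν ≠ ν'} = 0 := by
  let ι := {i : V × V // i.1 ∈ L ∧ i.2 ∈ outerNormals L i.1 ∧ c ≤ ⟪e, i.2⟫}
  have hpos : ∀ i : ι, 0 < ⟪e, i.1.2⟫ := fun i => hc.trans_le i.2.2.2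
  obtain ⟨φ, hφ, hsub⟩ := exists_lipschitzWith_of_subgradients (C := (c⁻¹).toNNReal)
    (x := fun i : ι => P i.1.1) (a := fun i => ⟪e, i.1.2⟫⁻¹ • P i.1.2) (h := fun i => -⟪e, i.1.1⟫)
    (fun i => by
      rw [Real.coe_toNNReal _ (inv_nonneg.2 hc.le)]
      exact hP.norm_slope_le i.2.2.1.1 hc i.2.2.2)
    (fun i j => by linarith [hP.height_le j.2.1 i.2.2.1 (hpos i)])
  refine nonpos_iff_eq_zero.1
    ((hP.hausdorffMeasure_le_image (L := L) hc (Nat.cast_nonneg _) ?_).trans_eq ?_)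
  · rintro Y ⟨hY, ν, hν, -, -, hcν, -⟩
    exact ⟨hY, ν, hν, hcν⟩
  · refine mul_eq_zero_of_right _ (measure_mono_null ?_
      (ae_iff.1 (ae_subgradient_unique_of_lipschitzWith hφ μH[Module.finrank ℝ W])))
    rintro - ⟨Y, ⟨hY, ν, hν, ν', hν', hcν, hcν', hne⟩, rfl⟩ hunique
    exact hne (hP.eq_of_slope_eq hν.1 hν'.1 (hc.trans_le hcν) (hc.trans_le hcν')
      (hunique _ _ (hsub ⟨(Y, ν), hY, hν, hcν⟩) (hsub ⟨(Y, ν'), hY, hν', hcν'⟩)))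

variable [Fact (Module.finrank ℝ V = n + 1)]

lemma hausdorffMeasure_frontier_lt_top {L : Set V} (hL : IsCompact L) (hLc : Convex ℝ L)
    (hLi : (interior L).Nonempty) : μH[(n : ℝ)] (frontier L) < ∞ := by
  have : FiniteDimensional ℝ V := .of_fact_finrank_eq_succ n
  refine (hL.of_isClosed_subset isClosed_frontier hL.isClosed.frontier_subset
    ).measure_lt_top_of_nhdsWithin fun Y hY => ?_
  obtain ⟨e, he, c, hc, hU⟩ := exists_unit_eventually_le_inner hLi hY.2
  have hP := isOrthogonalSplitting_orthogonalProjectionOnto he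
  have hdim : Module.finrank ℝ (ℝ ∙ e)ᗮ = n :=
    Submodule.finrank_orthogonal_span_singleton (norm_ne_zero_iff.1 (he ▸ one_ne_zero))
  refine ⟨frontier L ∩ {X | ∀ ν ∈ outerNormals L X, c ≤ ⟪e, ν⟫},
    inter_mem_nhdsWithin _ hU, ?_⟩
  have hpatch : frontier L ∩ {X | ∀ ν ∈ outerNormals L X, c ≤ ⟪e, ν⟫} ⊆ normalPatch L e c :=
    fun X ⟨hX, hcX⟩ => by
      obtain ⟨ν, hν⟩ := outerNormals_nonempty hLc hLi hX.2
      exact ⟨hL.isClosed.frontier_subset hX, ν, hν, hcX ν hν⟩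
  refine (hP.hausdorffMeasure_le_image hc (Nat.cast_nonneg n) hpatch).trans_lt
    (ENNReal.mul_lt_top (ENNReal.rpow_lt_top_of_nonneg n.cast_nonneg ENNReal.ofReal_ne_top) ?_)
  have hbdd := (hL.image (ℝ ∙ e)ᗮ.orthogonalProjectionOnto.continuous).isBounded.subset
    (image_mono (hpatch.trans (sep_subset _ _)))
  rw [← hdim]
  exact hbdd.measure_lt_top

lemma ae_subsingleton_outerNormals {L : Set V} (hL : IsClosed L) (hLi : (interior L).Nonempty) :
    ∀ᵐ Y ∂(μH[(n : ℝ)]).restrict (frontier L), (outerNormals L Y).Subsingleton := by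
  have : FiniteDimensional ℝ V := .of_fact_finrank_eq_succ n
  rw [ae_restrict_iff' isClosed_frontier.measurableSet, ae_iff]
  refine measure_null_of_locally_null _ fun Y hY => ?_
  rw [mem_ofPred_eq, Classical.not_imp] at hY
  obtain ⟨e, he, c, hc, hU⟩ := exists_unit_eventually_le_inner hLi hY.1.2
  have hP := isOrthogonalSplitting_orthogonalProjectionOnto he
  have hdim : Module.finrank ℝ (ℝ ∙ e)ᗮ = n :=
    Submodule.finrank_orthogonal_span_singleton (norm_ne_zero_iff.1 (he ▸ one_ne_zero))
  refine ⟨_, inter_mem_nhdsWithin _ hU, measure_mono_null ?_ (hdim ▸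
    hP.hausdorffMeasure_setOf_ne L hc)⟩
  rintro X ⟨hX, hcX⟩
  rw [mem_ofPred_eq, Classical.not_imp, not_subsingleton_iff] at hX
  obtain ⟨hXL, ν, hν, ν', hν', hne⟩ := hX
  exact ⟨hL.frontier_subset hXL, ν, hν, ν', hν', hcX ν hν, hcX ν' hν', hne⟩

end Frontier

section WeakConvergence

variable {Ω Ω' : Type*} [TopologicalSpace Ω] [MeasurableSpace Ω] [TopologicalSpace Ω']
  {μ : Measure Ω} {μs : ℕ → Measure Ω}

lemma eventually_integral_sub_lt [OpensMeasurableSpace Ω] [IsFiniteMeasure μ]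
    (hfin : ∀ᶠ m in atTop, IsFiniteMeasure (μs m))
    (hopen : ∀ G, IsOpen G → μ G ≤ atTop.liminf fun m => μs m G)
    {F : BoundedContinuousFunction Ω ℝ} (hF : 0 ≤ F) {ε : ℝ} (hε : 0 < ε) :
    ∀ᶠ m in atTop, ∫ x, F x ∂μ - ε < ∫ x, F x ∂μs m := by
  have lintegral_eq : ∀ (ν : Measure Ω) [IsFiniteMeasure ν],
      ∫⁻ x, ENNReal.ofReal (F x) ∂ν = ENNReal.ofReal (∫ x, F x ∂ν) := fun ν _ =>
    (ofReal_integral_eq_lintegral_ofReal (F.integrable ν) (Eventually.of_forall hF)).symm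
  rcases lt_or_ge (∫ x, F x ∂μ - ε) 0 with hneg | hnonneg
  · exact Eventually.of_forall fun m => hneg.trans_le (integral_nonneg hF)
  have hlt : ENNReal.ofReal (∫ x, F x ∂μ - ε) <
      atTop.liminf fun m => ∫⁻ x, ENNReal.ofReal (F x) ∂μs m :=
    calc ENNReal.ofReal (∫ x, F x ∂μ - ε) < ENNReal.ofReal (∫ x, F x ∂μ) :=
          (ENNReal.ofReal_lt_ofReal_iff_of_nonneg hnonneg).2 (sub_lt_self _ hε)
      _ = ∫⁻ x, ENNReal.ofReal (F x) ∂μ := (lintegral_eq μ).symm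
      _ ≤ _ := lintegral_le_liminf_lintegral_of_forall_isOpen_measure_le_liminf_measure
          F.continuous hF hopen
  filter_upwards [eventually_lt_of_lt_liminf hlt, hfin] with m hm _
  exact ENNReal.ofReal_lt_ofReal_iff_of_nonneg hnonneg |>.1 (hm.trans_eq (lintegral_eq _))

lemma tendsto_integral_of_forall_isOpen_le_liminf [OpensMeasurableSpace Ω] [IsFiniteMeasure μ]
    (hopen : ∀ G, IsOpen G → μ G ≤ atTop.liminf fun m => μs m G)
    (htot : Tendsto (fun m => μs m univ) atTop (𝓝 (μ univ))) (g : BoundedContinuousFunction Ω ℝ) :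
    Tendsto (fun m => ∫ x, g x ∂μs m) atTop (𝓝 (∫ x, g x ∂μ)) := by
  have hfin : ∀ᶠ m in atTop, IsFiniteMeasure (μs m) :=
    (htot.eventually_lt_const (measure_lt_top μ univ)).mono fun m hm => ⟨hm⟩
  have hreal : Tendsto (fun m => ‖g‖ * (μs m).real univ) atTop (𝓝 (‖g‖ * μ.real univ)) :=
    ((ENNReal.tendsto_toReal (measure_ne_top μ univ)).comp htot).const_mul _
  have integral_add_eq : ∀ (h : BoundedContinuousFunction Ω ℝ) (ν : Measure Ω) [IsFiniteMeasure ν],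
      ∫ x, (BoundedContinuousFunction.const Ω ‖g‖ + h) x ∂ν =
        ‖g‖ * ν.real univ + ∫ x, h x ∂ν := fun h ν _ => by
    simp only [BoundedContinuousFunction.coe_add, Pi.add_apply,
      BoundedContinuousFunction.const_apply]
    rw [integral_add (integrable_const _) (h.integrable ν), integral_const, smul_eq_mul, mul_comm]
  have lower : ∀ h : BoundedContinuousFunction Ω ℝ, ‖h‖ ≤ ‖g‖ → ∀ ε : ℝ, 0 < ε →
      ∀ᶠ m in atTop, ∫ x, h x ∂μ - ε < ∫ x, h x ∂μs m := fun h hh ε hε => by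
    have hpos : 0 ≤ BoundedContinuousFunction.const Ω ‖g‖ + h := fun x => by
      have := (abs_le.1 ((h.norm_coe_le_norm x).trans hh)).1
      exact neg_le_iff_add_nonneg'.1 this
    filter_upwards [eventually_integral_sub_lt hfin hopen hpos (half_pos hε),
      hreal.eventually_lt_const (lt_add_of_pos_right _ (half_pos hε)), hfin] with m h₁ h₂ _
    rw [integral_add_eq h, integral_add_eq h] at h₁
    linarith
  refine tendsto_order.2 ⟨fun a ha => ?_, fun b hb => ?_⟩
  · filter_upwards [lower g le_rfl _ (sub_pos.2 ha)] with m hm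
    linarith
  · filter_upwards [lower (-g) (norm_neg g).le _ (sub_pos.2 hb)] with m hm
    simp only [BoundedContinuousFunction.coe_neg, Pi.neg_apply, integral_neg] at hm
    linarith

-- The sets `U k` of points near which every `h m` with `k ≤ m` takes its values in `G` are open and
-- exhaust `h' ⁻¹' G` up to a null set.
lemma measure_preimage_le_liminf (hopen : ∀ G, IsOpen G → μ G ≤ atTop.liminf fun m => μs m G)
    {D : ℕ → Set Ω} (hD : ∀ m, ∀ᵐ y ∂μs m, y ∈ D m) {h : ℕ → Ω → Ω'} {h' : Ω → Ω'}
    (hlim : ∀ᵐ x ∂μ, Tendsto (fun p : ℕ × Ω => h p.1 p.2)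
      ((atTop ×ˢ 𝓝 x) ⊓ 𝓟 {p | p.2 ∈ D p.1}) (𝓝 (h' x)))
    {G : Set Ω'} (hG : IsOpen G) :
    μ (h' ⁻¹' G) ≤ atTop.liminf fun m => μs m (h m ⁻¹' G) := by
  let U : ℕ → Set Ω := fun k => interior {y | ∀ m, k ≤ m → y ∈ D m → h m y ∈ G}
  have hU : Monotone U := fun k l hkl => interior_mono fun y hy m hm => hy m (hkl.trans hm)
  have hcover : h' ⁻¹' G ≤ᵐ[μ] ⋃ k, U k := by
    filter_upwards [hlim] with x hx (hxG : h' x ∈ G)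
    have hev := eventually_inf_principal.1 (hx.eventually (hG.mem_nhds hxG))
    obtain ⟨pa, ha, pb, hb, hab⟩ := eventually_prod_iff.1 hev
    obtain ⟨k, hk⟩ := eventually_atTop.1 ha
    exact mem_iUnion.2 ⟨k, mem_interior_iff_mem_nhds.2 <|
      mem_of_superset hb fun y hy m hm hyD => hab (hk m hm) hy hyD⟩
  calc μ (h' ⁻¹' G) ≤ μ (⋃ k, U k) := measure_mono_ae hcover
    _ = ⨆ k, μ (U k) := hU.measure_iUnion
    _ ≤ _ := iSup_le fun k => (hopen _ isOpen_interior).trans <| liminf_le_liminf <| by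
      filter_upwards [eventually_ge_atTop k] with m hm
      refine measure_mono_ae ?_
      filter_upwards [hD m] with y hyD hyU
      exact interior_subset hyU m hm hyD

lemma tendsto_integral_comp_of_forall_isOpen_le_liminf [MeasurableSpace Ω']
    [OpensMeasurableSpace Ω'] [IsFiniteMeasure μ]
    (hopen : ∀ G, IsOpen G → μ G ≤ atTop.liminf fun m => μs m G)
    (htot : Tendsto (fun m => μs m univ) atTop (𝓝 (μ univ)))
    {D : ℕ → Set Ω} (hD : ∀ m, ∀ᵐ y ∂μs m, y ∈ D m) {h : ℕ → Ω → Ω'} {h' : Ω → Ω'}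
    (hh : ∀ m, Measurable (h m)) (hh' : Measurable h')
    (hlim : ∀ᵐ x ∂μ, Tendsto (fun p : ℕ × Ω => h p.1 p.2)
      ((atTop ×ˢ 𝓝 x) ⊓ 𝓟 {p | p.2 ∈ D p.1}) (𝓝 (h' x)))
    (g : BoundedContinuousFunction Ω' ℝ) :
    Tendsto (fun m => ∫ x, g (h m x) ∂μs m) atTop (𝓝 (∫ x, g (h' x) ∂μ)) := by
  have key := tendsto_integral_of_forall_isOpen_le_liminf (μ := μ.map h')
    (μs := fun m => (μs m).map (h m)) (fun G hG => ?_) ?_ g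
  · simpa only [integral_map (hh _).aemeasurable g.continuous.measurable.aestronglyMeasurable,
      integral_map hh'.aemeasurable g.continuous.measurable.aestronglyMeasurable] using key
  · simpa only [Measure.map_apply (hh _) hG.measurableSet,
      Measure.map_apply hh' hG.measurableSet] using measure_preimage_le_liminf hopen hD hlim hG
  · simpa only [Measure.map_apply (hh _) MeasurableSet.univ,
      Measure.map_apply hh' MeasurableSet.univ, preimage_univ] using htot

end WeakConvergence

section GaussMap

lemma exists_boundedContinuousFunction_eqOn {X : Type*} [TopologicalSpace X] [NormalSpace X]
    [T2Space X] {g : X → ℝ} {S : Set X} (hg : ContinuousOn g S) (hS : IsCompact S) :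
    ∃ G : BoundedContinuousFunction X ℝ, EqOn G g S := by
  have : CompactSpace S := isCompact_iff_compactSpace.1 hS
  obtain ⟨G, -, hG⟩ := (BoundedContinuousFunction.mkOfCompact
    ⟨S.domRestrict g, hg.domRestrict⟩).exists_norm_eq_domRestrict_eq_of_closed hS.isClosed
  exact ⟨G, fun x hx => DFunLike.congr_fun hG ⟨x, hx⟩⟩

variable {V : Type*} [NormedAddCommGroup V] [InnerProductSpace ℝ V]

lemma tendsto_of_subsingleton_outerNormals [ProperSpace V] {K : ConvexBody V}
    {Km : ℕ → ConvexBody V} (hKm : Tendsto Km atTop (𝓝 K)) {N : V → V} {Nm : ℕ → V → V} {X : V}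
    (hN : N X ∈ outerNormals (K : Set V) X) (hX : (outerNormals (K : Set V) X).Subsingleton) :
    Tendsto (fun p : ℕ × V => (p.2, Nm p.1 p.2))
      ((atTop ×ˢ 𝓝 X) ⊓ 𝓟 {p | Nm p.1 p.2 ∈ outerNormals (Km p.1 : Set V) p.2})
      (𝓝 (X, N X)) := by
  refine Tendsto.prodMk_nhds (tendsto_snd.mono_left inf_le_left) ?_
  refine tendsto_nhds.2 fun U hU hNU => ?_
  have hsub : outerNormals (K : Set V) X ⊆ U := fun ν hν => hX hν hN ▸ hNU
  have hpair : Tendsto (fun p : ℕ × V => (Km p.1, p.2)) (atTop ×ˢ 𝓝 X) (𝓝 (K, X)) :=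
    (hKm.comp tendsto_fst).prodMk_nhds tendsto_snd
  exact eventually_inf_principal.2 <|
    (hpair.eventually (eventually_outerNormals_subset hU hsub)).mono fun p hp hmem => hp hmem

variable [MeasurableSpace V] [BorelSpace V] [Fact (Module.finrank ℝ V = n + 1)]

theorem tendsto_setIntegral_frontier_comp_normal {K : ConvexBody V}
    (hK : (interior (K : Set V)).Nonempty) {Km : ℕ → ConvexBody V} (hKm : Tendsto Km atTop (𝓝 K))
    {N : V → V} {Nm : ℕ → V → V} (hNmeas : Measurable N) (hNmmeas : ∀ m, Measurable (Nm m))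
    (hN : ∀ᵐ X ∂(μH[(n : ℝ)]).restrict (frontier (K : Set V)), N X ∈ outerNormals (K : Set V) X)
    (hNm : ∀ m, ∀ᵐ X ∂(μH[(n : ℝ)]).restrict (frontier (Km m : Set V)),
      Nm m X ∈ outerNormals (Km m : Set V) X)
    {g : V × V → ℝ} (hg : Continuous g) :
    Tendsto (fun m => ∫ X in frontier (Km m : Set V), g (X, Nm m X) ∂μH[(n : ℝ)]) atTop
      (𝓝 (∫ X in frontier (K : Set V), g (X, N X) ∂μH[(n : ℝ)])) := by
  have : FiniteDimensional ℝ V := .of_fact_finrank_eq_succ n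
  have := FiniteDimensional.proper ℝ V
  have : IsFiniteMeasure ((μH[(n : ℝ)]).restrict (frontier (K : Set V))) :=
    ⟨by simpa using hausdorffMeasure_frontier_lt_top K.isCompact K.convex hK⟩
  have hlsc := fun U (hU : IsOpen U) =>
    lowerSemicontinuousAt_hausdorffMeasure_frontier_inter hK n.cast_nonneg hU
  have htot : Tendsto (fun m => μH[(n : ℝ)] (frontier (Km m : Set V))) atTop _ :=
    (continuousAt_hausdorffMeasure_frontier hK n.cast_nonneg).tendsto.comp hKm
  obtain ⟨p, hp⟩ := hK
  obtain ⟨_, R, _, _, hball⟩ := exists_eventually_closedBall_subset_convexBody hp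
  obtain ⟨G, hG⟩ := exists_boundedContinuousFunction_eqOn hg.continuousOn
    ((isCompact_closedBall p R).prod (isCompact_sphere (0 : V) 1))
  have integral_eq : ∀ (L : ConvexBody V) (M : V → V), (L : Set V) ⊆ closedBall p R →
      (∀ᵐ X ∂(μH[(n : ℝ)]).restrict (frontier (L : Set V)), M X ∈ outerNormals (L : Set V) X) →
      ∫ X in frontier (L : Set V), G (X, M X) ∂μH[(n : ℝ)] =
        ∫ X in frontier (L : Set V), g (X, M X) ∂μH[(n : ℝ)] := fun L M hL hM => by
    refine integral_congr_ae ?_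
    filter_upwards [hM, ae_restrict_mem isClosed_frontier.measurableSet] with X hX hXL
    exact hG ⟨hL (L.isClosed.frontier_subset hXL), mem_sphere_zero_iff_norm.2 hX.1⟩
  rw [← integral_eq K N hball.self_of_nhds.2 hN]
  refine (tendsto_integral_comp_of_forall_isOpen_le_liminf
    (h := fun m X => (X, Nm m X)) (h' := fun X => (X, N X)) (fun U hU => ?_) ?_ hNm
    (fun m => measurable_id.prodMk (hNmmeas m)) (measurable_id.prodMk hNmeas) ?_ G).congr' ?_
  · simp only [Measure.restrict_apply hU.measurableSet, inter_comm U]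
    exact (hlsc U hU).le_liminf.trans (liminf_le_liminf_of_le hKm)
  · simpa only [Measure.restrict_apply MeasurableSet.univ, univ_inter] using htot
  · filter_upwards [hN, ae_subsingleton_outerNormals K.isClosed ⟨p, hp⟩] with X hX hXs
    exact tendsto_of_subsingleton_outerNormals hKm hX hXs
  · filter_upwards [hKm.eventually hball] with m hm
    exact integral_eq _ _ hm.2 (hNm m)

end GaussMap

section SingularWeight

variable {V W : Type*} [NormedAddCommGroup V] [InnerProductSpace ℝ V]
  [NormedAddCommGroup W] [InnerProductSpace ℝ W] {e : V} {P : V →L[ℝ] W}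

lemma IsOrthogonalSplitting.neg (hP : IsOrthogonalSplitting e P) :
    IsOrthogonalSplitting (-e) P := fun x y => by
  rw [inner_neg_left, inner_neg_left, neg_mul_neg]
  exact hP x y

lemma IsOrthogonalSplitting.abs_inner_le (hP : IsOrthogonalSplitting e P) (x : V) :
    |⟪e, x⟫| ≤ ‖x‖ :=
  abs_le_of_sq_le_sq (hP.norm_sq x ▸ le_add_of_nonneg_right (sq_nonneg _)) (norm_nonneg x)

lemma IsOrthogonalSplitting.frontier_inter_subset_normalPatch [CompleteSpace V]
    (hP : IsOrthogonalSplitting e P) {L : Set V} (hL : IsClosed L) (hLc : Convex ℝ L) {p : V}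
    {ρ R : ℝ} (hρ : 0 < ρ) (hR : 0 < R) (hb : closedBall p ρ ⊆ L) (hLR : L ⊆ closedBall p R) :
    frontier L ∩ P ⁻¹' ball (P p) (ρ / 2) ⊆
      normalPatch L e (ρ / (2 * R)) ∪ normalPatch L (-e) (ρ / (2 * R)) := by
  rintro Y ⟨hY, hYP⟩
  have hYL := hL.frontier_subset hY
  have hp : p ∈ interior L := interior_mono hb (ball_subset_interior_closedBall (mem_ball_self hρ))
  obtain ⟨ν, hν⟩ := outerNormals_nonempty hLc ⟨p, hp⟩ hY.2
  have hproj : ⟪P (Y - p), P ν⟫ ≤ ρ / 2 := calc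
    ⟪P (Y - p), P ν⟫ ≤ ‖P (Y - p)‖ * ‖P ν‖ := real_inner_le_norm _ _
    _ ≤ ρ / 2 * 1 := by
      refine mul_le_mul ?_ (hν.1 ▸ hP.norm_apply_le ν) (norm_nonneg _) (half_pos hρ).le
      rw [map_sub, ← dist_eq_norm]
      exact (mem_ball.1 hYP).le
    _ = ρ / 2 := mul_one _
  have hheight : ρ / 2 ≤ R * |⟪e, ν⟫| := calc
    ρ / 2 ≤ ⟪e, Y - p⟫ * ⟪e, ν⟫ := by
      have h := le_inner_sub_of_closedBall_subset hρ.le hb hν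
      rw [hP (Y - p) ν] at h
      linarith
    _ ≤ |⟪e, Y - p⟫| * |⟪e, ν⟫| := (le_abs_self _).trans_eq (abs_mul _ _)
    _ ≤ R * |⟪e, ν⟫| := by
      gcongr
      exact (hP.abs_inner_le _).trans (mem_closedBall_iff_norm.1 (hLR hYL))
  have hslope : ρ / (2 * R) ≤ |⟪e, ν⟫| := by
    rwa [← div_div, div_le_iff₀' hR]
  refine (le_abs.1 hslope).imp (fun h => ⟨hYL, ν, hν, h⟩) fun h => ⟨hYL, ν, hν, ?_⟩
  rwa [inner_neg_left]

section

variable [MeasurableSpace V] [BorelSpace V] [MeasurableSpace W] [BorelSpace W]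

lemma IsOrthogonalSplitting.setLIntegral_normalPatch_comp_le (hP : IsOrthogonalSplitting e P)
    (L : Set V) {c d : ℝ} (hc : 0 < c) (hd : 0 ≤ d) {G : W → ℝ≥0∞} (hG : Measurable G) :
    ∫⁻ X in normalPatch L e c, G (P X) ∂μH[d] ≤
      ENNReal.ofReal (c⁻¹ + 1) ^ d * ∫⁻ y, G y ∂μH[d] := by
  rw [← lintegral_map hG P.continuous.measurable, ← smul_eq_mul, ← lintegral_smul_measure]
  exact lintegral_mono' (hP.map_restrict_normalPatch_le L hc hd) le_rfl

lemma IsOrthogonalSplitting.lintegral_frontier_comp_le [CompleteSpace V]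
    (hP : IsOrthogonalSplitting e P) {L : Set V} (hL : IsClosed L) (hLc : Convex ℝ L) {p : V}
    {ρ R d : ℝ} (hρ : 0 < ρ) (hR : 0 < R) (hb : closedBall p ρ ⊆ L) (hLR : L ⊆ closedBall p R)
    (hd : 0 ≤ d) {G : W → ℝ≥0∞} (hG : Measurable G) (hsupp : G.support ⊆ ball (P p) (ρ / 2)) :
    ∫⁻ X in frontier L, G (P X) ∂μH[d] ≤
      2 * ENNReal.ofReal ((ρ / (2 * R))⁻¹ + 1) ^ d * ∫⁻ y, G y ∂μH[d] := by
  have hc : 0 < ρ / (2 * R) := by positivity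
  have hsupp' : (fun X => G (P X)).support ⊆ P ⁻¹' ball (P p) (ρ / 2) := fun X hX => hsupp hX
  rw [← setLIntegral_eq_of_support_subset hsupp',
    Measure.restrict_restrict (P.continuous.measurable measurableSet_ball), inter_comm]
  calc ∫⁻ X in frontier L ∩ P ⁻¹' ball (P p) (ρ / 2), G (P X) ∂μH[d]
      ≤ ∫⁻ X in normalPatch L e (ρ / (2 * R)) ∪ normalPatch L (-e) (ρ / (2 * R)),
          G (P X) ∂μH[d] :=
        lintegral_mono_set (hP.frontier_inter_subset_normalPatch hL hLc hρ hR hb hLR)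
    _ ≤ _ := lintegral_union_le _ _ _
    _ ≤ _ := add_le_add (hP.setLIntegral_normalPatch_comp_le L hc hd hG)
        (hP.neg.setLIntegral_normalPatch_comp_le L hc hd hG)
    _ = _ := by rw [← two_mul, mul_assoc]

end

section

lemma exists_continuous_eqOn_compl_ball {X F : Type*} [MetricSpace X]
    [SeminormedAddCommGroup F] [NormedSpace ℝ F] {φ : X → F} {y : X} {r : ℝ}
    (hφ : ContinuousOn φ {y}ᶜ) (hr : 0 < r) :
    ∃ ψ : X → F, Continuous ψ ∧ EqOn φ ψ (ball y r)ᶜ ∧ ∀ x, ‖φ x - ψ x‖ ≤ ‖φ x‖ := by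
  obtain ⟨χ, hχ₀, hχ₁, hχ⟩ := exists_continuous_zero_one_of_isClosed isClosed_closedBall
    isOpen_ball.isClosed_compl
    (disjoint_compl_right_iff_subset.2 (closedBall_subset_ball (half_lt_self hr)) :
      Disjoint (closedBall y (r / 2)) (ball y r)ᶜ)
  refine ⟨fun x => χ x • φ x, continuous_iff_continuousAt.2 fun x => ?_, fun x hx => ?_,
    fun x => ?_⟩
  · rcases eq_or_ne x y with rfl | hxy
    · refine continuousAt_const.congr (f := fun _ => 0) ?_
      filter_upwards [closedBall_mem_nhds x (half_pos hr)] with z hz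
      rw [hχ₀ hz, Pi.zero_apply, zero_smul]
    · exact χ.continuous.continuousAt.smul (hφ.continuousAt (isOpen_compl_singleton.mem_nhds hxy))
  · simp only [hχ₁ hx, Pi.one_apply, one_smul]
  · have hχx := hχ x
    calc ‖φ x - χ x • φ x‖ = ‖(1 - χ x) • φ x‖ := by rw [sub_smul, one_smul]
      _ ≤ 1 * ‖φ x‖ := by
        rw [norm_smul, Real.norm_of_nonneg (sub_nonneg.2 hχx.2)]
        gcongr
        exact sub_le_self _ hχx.1
      _ = ‖φ x‖ := one_mul _

lemma exists_continuous_lintegral_edist_lt {X F : Type*} [MetricSpace X]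
    [MeasurableSpace X] [BorelSpace X] [NormedAddCommGroup F] [NormedSpace ℝ F] {μ : Measure X}
    [NullSingletonClass μ] {φ : X → F} {y : X} (hφ : ContinuousOn φ {y}ᶜ)
    (hφi : IntegrableAtFilter φ (𝓝 y) μ) {r : ℝ} (hr : 0 < r) {ε : ℝ≥0∞} (hε : 0 < ε) :
    ∃ ψ : X → F, Continuous ψ ∧ EqOn φ ψ (ball y r)ᶜ ∧ ∫⁻ x, edist (φ x) (ψ x) ∂μ < ε := by
  let ν := μ.withDensity fun x => ‖φ x‖ₑ
  obtain ⟨s, hs, hφs⟩ := hφi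
  obtain ⟨R, hR, hRs⟩ := Metric.mem_nhds_iff.1 hs
  have hν : ∀ δ, ν (ball y δ) = ∫⁻ x in ball y δ, ‖φ x‖ₑ ∂μ := fun δ =>
    withDensity_apply _ measurableSet_ball
  have hlim : Tendsto (fun δ => ν (ball y δ)) (𝓝[>] 0) (𝓝 0) := by
    have h := tendsto_measure_thickening_of_isClosed (μ := ν) (s := {y})
      ⟨R, hR, by rw [thickening_singleton, hν]; exact (hφs.mono_set hRs).2.ne⟩ isClosed_singleton
    rw [withDensity_absolutelyContinuous μ _ (measure_singleton y)] at h
    simpa only [thickening_singleton] using h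
  obtain ⟨δ, hδε, hδ₀, hδr⟩ :=
    ((hlim.eventually_lt_const hε).and (Ioo_mem_nhdsGT hr)).exists
  obtain ⟨ψ, hψ, hψφ, hψle⟩ := exists_continuous_eqOn_compl_ball hφ hδ₀
  refine ⟨ψ, hψ, hψφ.mono (compl_subset_compl.2 (ball_subset_ball hδr.le)), ?_⟩
  have hsupp : (fun x => edist (φ x) (ψ x)).support ⊆ ball y δ :=
    Function.support_subset_iff'.2 fun _ hx => edist_eq_zero.2 (hψφ hx)
  rw [← setLIntegral_eq_of_support_subset hsupp]
  refine (lintegral_mono fun x => ?_).trans_lt (hν δ ▸ hδε)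
  rw [edist_eq_enorm_sub]
  exact enorm_le_iff_norm_le.2 (hψle x)

lemma edist_integral_le_of_integrable {α F : Type*} [MeasurableSpace α] {μ : Measure α}
    [NormedAddCommGroup F] [NormedSpace ℝ F] {f g : α → F} (hf : AEStronglyMeasurable f μ)
    (hg : Integrable g μ) : edist (∫ a, f a ∂μ) (∫ a, g a ∂μ) ≤ ∫⁻ a, edist (f a) (g a) ∂μ := by
  by_cases hfin : ∫⁻ a, edist (f a) (g a) ∂μ = ∞
  · exact hfin ▸ le_top
  refine edist_integral_le_lintegral_edist ?_ hg
  have hsub : Integrable (f - g) μ :=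
    ⟨hf.sub hg.1, by
      simpa only [HasFiniteIntegral, Pi.sub_apply, ← edist_eq_enorm_sub] using Ne.lt_top hfin⟩
  simpa only [sub_add_cancel] using hsub.add hg

end

section

variable [MeasurableSpace V] [BorelSpace V] [Fact (Module.finrank ℝ V = n + 1)]

lemma integrableOn_frontier_comp_normal {L : Set V} (hL : IsCompact L) (hLc : Convex ℝ L)
    (hLi : (interior L).Nonempty) {M : V → V} (hMmeas : Measurable M)
    (hM : ∀ᵐ X ∂(μH[(n : ℝ)]).restrict (frontier L), M X ∈ outerNormals L X)
    {g : V × V → ℝ} (hg : Continuous g) :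
    IntegrableOn (fun X => g (X, M X)) (frontier L) μH[(n : ℝ)] := by
  have : FiniteDimensional ℝ V := .of_fact_finrank_eq_succ n
  have := FiniteDimensional.proper ℝ V
  obtain ⟨C, hC⟩ := (hL.prod (isCompact_sphere (0 : V) 1)).exists_bound_of_continuousOn
    hg.continuousOn
  refine Measure.integrableOn_of_bounded (hausdorffMeasure_frontier_lt_top hL hLc hLi).ne
    (hg.measurable.comp (measurable_id.prodMk hMmeas)).aestronglyMeasurable (M := C) ?_
  filter_upwards [hM, ae_restrict_mem isClosed_frontier.measurableSet] with X hX hXL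
  exact hC _ ⟨hL.isClosed.frontier_subset hXL, mem_sphere_zero_iff_norm.2 hX.1⟩

variable [MeasurableSpace W] [BorelSpace W]

lemma IsOrthogonalSplitting.edist_setIntegral_frontier_le (hP : IsOrthogonalSplitting e P)
    {L : Set V} (hL : IsCompact L) (hLc : Convex ℝ L) {p : V} {ρ R : ℝ} (hρ : 0 < ρ) (hR : 0 < R)
    (hb : closedBall p ρ ⊆ L) (hLR : L ⊆ closedBall p R) {M : V → V} (hMmeas : Measurable M)
    (hM : ∀ᵐ X ∂(μH[(n : ℝ)]).restrict (frontier L), M X ∈ outerNormals L X)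
    {φ ψ : W → ℝ} (hφ : Measurable φ) (hψ : Continuous ψ)
    (hφψ : EqOn φ ψ (ball (P p) (ρ / 2))ᶜ) {g : V × V → ℝ} (hg : Continuous g) {B : ℝ}
    (hB : ∀ z ∈ closedBall p R ×ˢ sphere (0 : V) 1, ‖g z‖ ≤ B) :
    edist (∫ X in frontier L, φ (P X) * g (X, M X) ∂μH[(n : ℝ)])
      (∫ X in frontier L, ψ (P X) * g (X, M X) ∂μH[(n : ℝ)]) ≤
      2 * ENNReal.ofReal ((ρ / (2 * R))⁻¹ + 1) ^ (n : ℝ) * ENNReal.ofReal B *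
        ∫⁻ y, edist (φ y) (ψ y) ∂μH[(n : ℝ)] := by
  have : FiniteDimensional ℝ V := .of_fact_finrank_eq_succ n
  have hLi : (interior L).Nonempty :=
    ⟨p, interior_mono hb (ball_subset_interior_closedBall (mem_ball_self hρ))⟩
  have hgM : Measurable fun X => g (X, M X) :=
    hg.measurable.comp (measurable_id.prodMk hMmeas)
  have hG : Measurable fun y => edist (φ y) (ψ y) := hφ.edist hψ.measurable
  have hsupp : (fun y => edist (φ y) (ψ y)).support ⊆ ball (P p) (ρ / 2) :=
    Function.support_subset_iff'.2 fun _ hy => edist_eq_zero.2 (hφψ hy)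
  have hpoint : ∀ᵐ X ∂(μH[(n : ℝ)]).restrict (frontier L),
      edist (φ (P X) * g (X, M X)) (ψ (P X) * g (X, M X)) ≤
        ENNReal.ofReal B * edist (φ (P X)) (ψ (P X)) := by
    filter_upwards [hM, ae_restrict_mem isClosed_frontier.measurableSet] with X hX hXL
    have hgB := hB (X, M X) ⟨hLR (hL.isClosed.frontier_subset hXL),
      mem_sphere_zero_iff_norm.2 hX.1⟩
    rw [edist_eq_enorm_sub, edist_eq_enorm_sub, ← sub_mul, enorm_mul, mul_comm, ← ofReal_norm (g _)]
    gcongr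
  calc edist (∫ X in frontier L, φ (P X) * g (X, M X) ∂μH[(n : ℝ)])
        (∫ X in frontier L, ψ (P X) * g (X, M X) ∂μH[(n : ℝ)])
      ≤ ∫⁻ X in frontier L, edist (φ (P X) * g (X, M X)) (ψ (P X) * g (X, M X)) ∂μH[(n : ℝ)] :=
        edist_integral_le_of_integrable
          ((hφ.comp P.continuous.measurable).mul hgM).aestronglyMeasurable
          (integrableOn_frontier_comp_normal hL hLc hLi hMmeas hM
            (g := fun z => ψ (P z.1) * g z) (by fun_prop))
    _ ≤ ∫⁻ X in frontier L, ENNReal.ofReal B * edist (φ (P X)) (ψ (P X)) ∂μH[(n : ℝ)] :=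
        lintegral_mono_ae hpoint
    _ = ENNReal.ofReal B * ∫⁻ X in frontier L, edist (φ (P X)) (ψ (P X)) ∂μH[(n : ℝ)] :=
        lintegral_const_mul' _ _ ENNReal.ofReal_ne_top
    _ ≤ ENNReal.ofReal B * _ := mul_le_mul_right
        (hP.lintegral_frontier_comp_le hL.isClosed hLc hρ hR hb hLR n.cast_nonneg hG hsupp) _
    _ = _ := by ring

theorem IsOrthogonalSplitting.tendsto_setIntegral_frontier_comp_mul
    (hP : IsOrthogonalSplitting e P) (hn : n ≠ 0) {K : ConvexBody V} {p : V}
    (hp : p ∈ interior (K : Set V)) {Km : ℕ → ConvexBody V} (hKm : Tendsto Km atTop (𝓝 K))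
    {N : V → V} {Nm : ℕ → V → V} (hNmeas : Measurable N) (hNmmeas : ∀ m, Measurable (Nm m))
    (hN : ∀ᵐ X ∂(μH[(n : ℝ)]).restrict (frontier (K : Set V)), N X ∈ outerNormals (K : Set V) X)
    (hNm : ∀ m, ∀ᵐ X ∂(μH[(n : ℝ)]).restrict (frontier (Km m : Set V)),
      Nm m X ∈ outerNormals (Km m : Set V) X)
    {φ : W → ℝ} (hφ : ContinuousOn φ {P p}ᶜ)
    (hφi : IntegrableAtFilter φ (𝓝 (P p)) μH[(n : ℝ)]) {g : V × V → ℝ} (hg : Continuous g) :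
    Tendsto (fun m => ∫ X in frontier (Km m : Set V), φ (P X) * g (X, Nm m X) ∂μH[(n : ℝ)]) atTop
      (𝓝 (∫ X in frontier (K : Set V), φ (P X) * g (X, N X) ∂μH[(n : ℝ)])) := by
  have : FiniteDimensional ℝ V := .of_fact_finrank_eq_succ n
  have := FiniteDimensional.proper ℝ V
  have : NullSingletonClass (μH[(n : ℝ)] : Measure W) :=
    Measure.nullSingletonClass_hausdorff W (Nat.cast_pos.2 (Nat.pos_of_ne_zero hn))
  obtain ⟨ρ, R, hρ, hR, hball⟩ := exists_eventually_closedBall_subset_convexBody hp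
  obtain ⟨B, hB⟩ := ((isCompact_closedBall p R).prod
    (isCompact_sphere (0 : V) 1)).exists_bound_of_continuousOn hg.continuousOn
  set C := 2 * ENNReal.ofReal ((ρ / (2 * R))⁻¹ + 1) ^ (n : ℝ) * ENNReal.ofReal B
  have hCtop : C ≠ ∞ := by finiteness
  refine EMetric.tendsto_nhds.2 fun ε hε => ?_
  obtain ⟨ψ, hψ, hφψ, hψε⟩ := exists_continuous_lintegral_edist_lt hφ hφi (half_pos hρ)
    (ENNReal.div_pos (ENNReal.div_pos hε.ne' (by finiteness)).ne' hCtop : 0 < ε / 3 / C)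
  have happrox : ∀ (L : ConvexBody V) (M : V → V),
      closedBall p ρ ⊆ (L : Set V) ∧ (L : Set V) ⊆ closedBall p R → Measurable M →
      (∀ᵐ X ∂(μH[(n : ℝ)]).restrict (frontier (L : Set V)), M X ∈ outerNormals (L : Set V) X) →
      edist (∫ X in frontier (L : Set V), φ (P X) * g (X, M X) ∂μH[(n : ℝ)])
        (∫ X in frontier (L : Set V), ψ (P X) * g (X, M X) ∂μH[(n : ℝ)]) < ε / 3 :=
    fun L M hL hMmeas hM => (hP.edist_setIntegral_frontier_le L.isCompact L.convex hρ hR hL.1 hL.2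
      hMmeas hM (measurable_of_continuousOn_compl_singleton _ hφ) hψ hφψ hg hB).trans_lt
      (by rw [mul_comm]; exact ENNReal.mul_lt_of_lt_div hψε)
  have hcont := tendsto_setIntegral_frontier_comp_normal ⟨p, hp⟩ hKm hNmeas hNmmeas hN hNm
    (g := fun z => ψ (P z.1) * g z) (by fun_prop)
  filter_upwards [EMetric.tendsto_nhds.1 hcont (ε / 3)
    (ENNReal.div_pos hε.ne' (by finiteness)), hKm.eventually hball] with m hm hmball
  calc _ ≤ _ := edist_triangle4 _ _ _ _
    _ < ε / 3 + ε / 3 + ε / 3 := ENNReal.add_lt_add (ENNReal.add_lt_add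
        (happrox (Km m) (Nm m) hmball (hNmmeas m) (hNm m)) hm)
        (by rw [edist_comm]; exact happrox K N hball.self_of_nhds hNmeas hN)
    _ = ε := ENNReal.add_thirds ε

end

end SingularWeight

section Volume

variable {V : Type*} [NormedAddCommGroup V] [NormedSpace ℝ V]

lemma eventually_mem_convexBody_iff {K : ConvexBody V} {X : V} (hX : X ∉ frontier (K : Set V)) :
    ∀ᶠ L : ConvexBody V in 𝓝 K, (X ∈ L ↔ X ∈ K) := by
  by_cases hXK : X ∈ K
  · have hXi : (K : Set V) ∈ 𝓝 X := by
      by_contra hXi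
      exact hX ⟨subset_closure hXK, fun h => hXi (mem_interior_iff_mem_nhds.1 h)⟩
    obtain ⟨r, hr, hball⟩ := nhds_basis_closedBall.mem_iff.1 hXi
    filter_upwards [eventually_subset_thickening K hr] with L hL
    refine iff_of_true ?_ hXK
    rw [← SetLike.mem_coe, ← L.isClosed.closure_eq]
    exact mem_closure_of_closedBall_subset_thickening L.convex hr (hball.trans hL.2)
  · have hpos : 0 < infDist X (K : Set V) :=
      (K.isClosed.notMem_iff_infDist_pos K.nonempty).1 hXK
    filter_upwards [(continuous_infDist_convexBody X).continuousAt.eventually (lt_mem_nhds hpos)]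
      with L hL
    exact iff_of_false ((L.isClosed.notMem_iff_infDist_pos L.nonempty).2 hL) hXK

variable [FiniteDimensional ℝ V] [MeasurableSpace V] [BorelSpace V]
  {F : Type*} [NormedAddCommGroup F] [NormedSpace ℝ F]

theorem continuous_setIntegral_convexBody {μ : Measure V} [μ.IsAddHaarMeasure] {w : V → F}
    (hw : LocallyIntegrable w μ) :
    Continuous fun K : ConvexBody V => ∫ X in (K : Set V), w X ∂μ := by
  refine continuous_iff_continuousAt.2 fun K => ?_
  have : ProperSpace V := FiniteDimensional.proper ℝ V
  have hbound : IntegrableOn w (cthickening 1 (K : Set V)) μ :=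
    hw.integrableOn_isCompact K.isCompact.cthickening
  have hlim : Tendsto (fun L : ConvexBody V => ∫ X, (L : Set V).indicator w X ∂μ) (𝓝 K)
      (𝓝 (∫ X, (K : Set V).indicator w X ∂μ)) := by
    refine tendsto_integral_filter_of_dominated_convergence
      ((cthickening 1 (K : Set V)).indicator fun X => ‖w X‖)
      (.of_forall fun L => hw.aestronglyMeasurable.indicator L.isClosed.measurableSet) ?_
      (IntegrableOn.integrable_indicator hbound.norm isClosed_cthickening.measurableSet) ?_
    · filter_upwards [eventually_subset_thickening K one_pos] with L hL
      refine .of_forall fun X => ?_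
      rw [norm_indicator_eq_indicator_norm]
      exact indicator_le_indicator_of_subset (hL.1.trans (thickening_subset_cthickening _ _))
        (fun _ => norm_nonneg _) X
    · filter_upwards [compl_mem_ae_iff.2 (K.convex.addHaar_frontier μ)] with X hX
      refine tendsto_nhds_of_eventually_eq ?_
      filter_upwards [eventually_mem_convexBody_iff hX] with L hL
      exact indicator_eq_indicator hL rfl
  simpa only [ContinuousAt, integral_indicator (ConvexBody.isClosed _).measurableSet] using hlim

end Volume

section WeightedVolume

lemma locallyIntegrable_comp_snd {X Y F : Type*} [TopologicalSpace X] [MeasurableSpace X]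
    [TopologicalSpace Y] [MeasurableSpace Y] [NormedAddCommGroup F] {μ : Measure X}
    [IsLocallyFiniteMeasure μ] {ν : Measure Y} [SFinite ν] [SFinite μ] {f : Y → F}
    (hf : LocallyIntegrable f ν) : LocallyIntegrable (fun z : X × Y => f z.2) (μ.prod ν) := by
  intro z
  obtain ⟨s, hs, hμs⟩ := μ.finiteAt_nhds z.1
  obtain ⟨t, ht, hft⟩ := hf z.2
  have := isFiniteMeasure_restrict.2 hμs.ne
  refine ⟨s ×ˢ t, prod_mem_nhds hs ht, ?_⟩
  rw [IntegrableOn, ← Measure.prod_restrict]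
  exact Integrable.comp_snd hft (μ.restrict s)

lemma locallyIntegrable_comp_measurePreserving {X Y F : Type*} [TopologicalSpace X]
    [MeasurableSpace X] [TopologicalSpace Y] [MeasurableSpace Y] [OpensMeasurableSpace Y]
    [NormedAddCommGroup F] {μ : Measure X} {ν : Measure Y} {T : X → Y}
    (hT : MeasurePreserving T μ ν) (hTc : Continuous T) {f : Y → F} (hf : LocallyIntegrable f ν) :
    LocallyIntegrable (f ∘ T) μ := by
  intro x
  obtain ⟨s, hs, hfs⟩ := hf (T x)
  obtain ⟨U, hUs, hU, hxU⟩ := mem_nhds_iff.1 hs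
  have hTU := hT.restrict_preimage hU.measurableSet
  exact ⟨T ⁻¹' U, (hU.preimage hTc).mem_nhds hxU, hTU.integrable_comp_of_integrable
    (hfs.mono_set hUs)⟩

lemma locallyIntegrable_norm_rpow {V : Type*} [NormedAddCommGroup V] [NormedSpace ℝ V]
    [FiniteDimensional ℝ V] [MeasurableSpace V] [BorelSpace V] {μ : Measure V} [μ.IsAddHaarMeasure]
    {s : ℝ} (hs : -(Module.finrank ℝ V : ℝ) < s) : LocallyIntegrable (fun x : V => ‖x‖ ^ s) μ := by
  rcases le_or_gt 0 s with hs0 | hs0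
  · exact (continuous_norm.rpow_const fun _ => .inr hs0).locallyIntegrable
  · have hdim : 0 < Module.finrank ℝ V := by
      exact_mod_cast neg_lt_zero.1 (hs.trans hs0)
    refine locallyIntegrable_of_norm_le_rpow hdim (C := 1) (neg_lt.1 hs) (.of_forall fun x => ?_)
      (measurable_norm.pow_const s).aestronglyMeasurable
    rw [neg_neg, one_mul, Real.norm_of_nonneg (by positivity)]

lemma measurePreserving_sndE_fstE :
    MeasurePreserving fun X : E (n + 1) => (sndE X, fstE X) := by
  convert ((MeasurePreserving.id volume).prod (PiLp.volume_preserving_toLp (Fin n))).comp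
    ((volume_preserving_piFinSuccAbove (fun _ => ℝ) (Fin.last n)).comp
      (PiLp.volume_preserving_ofLp (Fin (n + 1)))) using 1
  · ext X i
    · rfl
    · exact congrFun (Fin.removeNth_last X.ofLp).symm i
  · rfl

/-- `fstE`, the projection onto the hyperplane `H`, as a continuous linear map. -/
def fstECLM (n : ℕ) : E (n + 1) →L[ℝ] E n :=
  LinearMap.toContinuousLinearMap
    { toFun := fstE, map_add' := fun _ _ => rfl, map_smul' := fun _ _ => rfl }

lemma continuous_fstE : Continuous (fstE : E (n + 1) → E n) := (fstECLM n).continuous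

lemma isOrthogonalSplitting_fstECLM :
    IsOrthogonalSplitting (EuclideanSpace.single (Fin.last n) (1 : ℝ)) (fstECLM n) := by
  intro x y
  have hsum : ⟪x, y⟫ = ⟪fstE x, fstE y⟫ + y (Fin.last n) * x (Fin.last n) := by
    rw [PiLp.inner_apply, Fin.sum_univ_castSucc]
    rfl
  rw [hsum, EuclideanSpace.inner_single_left, EuclideanSpace.inner_single_left, map_one, one_mul,
    one_mul, add_comm, mul_comm]
  rfl

lemma locallyIntegrable_comp_fstE {F : Type*} [NormedAddCommGroup F] {φ : E n → F}
    (hφ : LocallyIntegrable φ) : LocallyIntegrable fun X : E (n + 1) => φ (fstE X) :=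
  locallyIntegrable_comp_measurePreserving measurePreserving_sndE_fstE
    (Continuous.prodMk (by unfold sndE; fun_prop) continuous_fstE) (locallyIntegrable_comp_snd hφ)

end WeightedVolume

section WeightedSurface

lemma integral_surfMeas {w : E (n + 1) → ℝ} (hw : Measurable w) (hw0 : ∀ X, 0 ≤ w X)
    {K : Set (E (n + 1))} {N : E (n + 1) → E (n + 1)} (hN : Measurable N) {f : E (n + 1) → ℝ}
    (hf : Measurable f) :
    ∫ ν, f ν ∂surfMeas w K N = ∫ X in frontier K, w X * f (N X) ∂μH[(n : ℝ)] := by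
  rw [surfMeas, integral_map hN.aemeasurable hf.aestronglyMeasurable,
    integral_withDensity_eq_integral_toReal_smul hw.ennreal_ofReal
      (.of_forall fun _ => ENNReal.ofReal_lt_top)]
  simp only [ENNReal.toReal_ofReal (hw0 _), smul_eq_mul]

theorem tendsto_setIntegral_frontier_norm_fstE_rpow_mul {s : ℝ} (hs : -(n : ℝ) < s)
    {K : ConvexBody (E (n + 1))} (hK : (interior (K : Set (E (n + 1)))).Nonempty)
    (hK0 : s < 0 → (0 : E n) ∈ fstE '' interior (K : Set (E (n + 1))))
    {Km : ℕ → ConvexBody (E (n + 1))} (hKm : Tendsto Km atTop (𝓝 K))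
    {N : E (n + 1) → E (n + 1)} {Nm : ℕ → E (n + 1) → E (n + 1)} (hNmeas : Measurable N)
    (hNmmeas : ∀ m, Measurable (Nm m))
    (hN : ∀ᵐ X ∂(μH[(n : ℝ)]).restrict (frontier (K : Set (E (n + 1)))),
      IsOuterNormalAt (K : Set (E (n + 1))) (N X) X)
    (hNm : ∀ m, ∀ᵐ X ∂(μH[(n : ℝ)]).restrict (frontier (Km m : Set (E (n + 1)))),
      IsOuterNormalAt (Km m : Set (E (n + 1))) (Nm m X) X)
    {g : E (n + 1) × E (n + 1) → ℝ} (hg : Continuous g) :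
    Tendsto (fun m => ∫ X in frontier (Km m : Set (E (n + 1))),
        ‖fstE X‖ ^ s * g (X, Nm m X) ∂μH[(n : ℝ)]) atTop
      (𝓝 (∫ X in frontier (K : Set (E (n + 1))), ‖fstE X‖ ^ s * g (X, N X) ∂μH[(n : ℝ)])) := by
  have : Fact (Module.finrank ℝ (E (n + 1)) = n + 1) := ⟨finrank_euclideanSpace_fin⟩
  rcases le_or_gt 0 s with hs0 | hs0
  · exact tendsto_setIntegral_frontier_comp_normal hK hKm hNmeas hNmmeas hN hNm
      (g := fun z => ‖fstE z.1‖ ^ s * g z)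
      (((continuous_fstE.comp continuous_fst).norm.rpow_const fun _ => .inr hs0).mul hg)
  · obtain ⟨p, hp, hp0⟩ := hK0 hs0
    have hn : n ≠ 0 := by
      rintro rfl
      simp only [CharP.cast_eq_zero, neg_zero] at hs
      exact lt_asymm hs hs0
    refine isOrthogonalSplitting_fstECLM.tendsto_setIntegral_frontier_comp_mul hn hp hKm hNmeas
      hNmmeas hN hNm (φ := fun x => ‖x‖ ^ s) (fun x hx => ?_) ?_ hg
    · have hx0 : x ≠ 0 := hp0 ▸ hx
      exact (continuousAt_id.norm.rpow_const (.inl (norm_ne_zero_iff.2 hx0))).continuousWithinAt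
    · exact locallyIntegrable_norm_rpow (by rwa [finrank_euclideanSpace_fin]) _

end WeightedSurface

theorem statement_8_general {n : ℕ} (q : ℝ) (hq : 0 < q)
    (Ψ : E (n + 1) → ℝ) (hΨc : Continuous Ψ) (hΨ0 : ∀ X, 0 ≤ Ψ X)
    (K : Set (E (n + 1))) (hK : IsCompact K) (hKc : Convex ℝ K)
    (hKi : (interior K).Nonempty)
    (Km : ℕ → Set (E (n + 1)))
    (hKm : ∀ m, IsCompact (Km m) ∧ Convex ℝ (Km m) ∧ (Km m).Nonempty)
    (hconv : Tendsto (fun m => hausdorffDist (Km m) K) atTop (𝓝 0))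
    (hK0 : q < n → (0 : E n) ∈ fstE '' interior K)
    (Nm : ℕ → E (n + 1) → E (n + 1)) (N : E (n + 1) → E (n + 1))
    (hNmmeas : ∀ m, Measurable (Nm m)) (hNmeas : Measurable N)
    (hNm : ∀ m, ∀ᵐ X ∂(μH[(n : ℝ)]).restrict (frontier (Km m)),
      IsOuterNormalAt (Km m) (Nm m X) X)
    (hN : ∀ᵐ X ∂(μH[(n : ℝ)]).restrict (frontier K), IsOuterNormalAt K (N X) X) :
    Tendsto (fun m => ∫ X in Km m, Ψ X * ‖fstE X‖ ^ (q - (n : ℝ))) atTop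
      (𝓝 (∫ X in K, Ψ X * ‖fstE X‖ ^ (q - (n : ℝ)))) ∧
    ∀ f : E (n + 1) → ℝ, Continuous f →
      Tendsto
        (fun m => ∫ ν, f ν ∂surfMeas (fun X => Ψ X * ‖fstE X‖ ^ (q - (n : ℝ))) (Km m) (Nm m))
        atTop
        (𝓝 (∫ ν, f ν ∂surfMeas (fun X => Ψ X * ‖fstE X‖ ^ (q - (n : ℝ))) K N)) := by
  let K' : ConvexBody (E (n + 1)) := ⟨K, hKc, hK, hKi.mono interior_subset⟩
  let Km' (m : ℕ) : ConvexBody (E (n + 1)) := ⟨Km m, (hKm m).2.1, (hKm m).1, (hKm m).2.2⟩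
  have hKm' : Tendsto Km' atTop (𝓝 K') := tendsto_iff_dist_tendsto_zero.2 hconv
  have hs : -(n : ℝ) < q - n := by linarith
  have hwloc : LocallyIntegrable fun X : E (n + 1) => Ψ X * ‖fstE X‖ ^ (q - (n : ℝ)) :=
    (locallyIntegrable_comp_fstE (locallyIntegrable_norm_rpow
      (by rwa [finrank_euclideanSpace_fin]))).continuous_mul hΨc
  refine ⟨((continuous_setIntegral_convexBody hwloc).tendsto K').comp hKm', fun f hf => ?_⟩
  have hw : Measurable fun X : E (n + 1) => Ψ X * ‖fstE X‖ ^ (q - (n : ℝ)) :=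
    hΨc.measurable.mul (continuous_fstE.measurable.norm.pow_const _)
  have hw0 (X : E (n + 1)) : 0 ≤ Ψ X * ‖fstE X‖ ^ (q - (n : ℝ)) :=
    mul_nonneg (hΨ0 X) (by positivity)
  simp only [integral_surfMeas hw hw0 hNmeas hf.measurable,
    integral_surfMeas hw hw0 (hNmmeas _) hf.measurable]
  simp only [mul_assoc, mul_left_comm (Ψ _)]
  exact tendsto_setIntegral_frontier_norm_fstE_rpow_mul (K := K') (Km := Km') hs hKi
    (fun h => hK0 (sub_neg.1 h)) hKm' hNmeas hNmmeas hN hNm (g := fun z => Ψ z.1 * f z.2)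
    (by fun_prop)

theorem statement_8 {n : ℕ} (q : ℝ) (hq : 0 < q)
    (Ψ : E (n + 1) → ℝ) (hΨc : Continuous Ψ) (hΨ0 : ∀ X, 0 ≤ Ψ X)
    (K : Set (E (n + 1))) (hK : IsCompact K) (hKc : Convex ℝ K)
    (hKi : (interior K).Nonempty)
    (Km : ℕ → Set (E (n + 1)))
    (hKm : ∀ m, IsCompact (Km m) ∧ Convex ℝ (Km m) ∧ (Km m).Nonempty)
    (hconv : Tendsto (fun m => hausdorffDist (Km m) K) atTop (𝓝 0))
    (hq' : q < n → (0 : E n) ∈ fstE '' (interior K ∩ ⋂ m, interior (Km m)))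
    (Nm : ℕ → E (n + 1) → E (n + 1)) (N : E (n + 1) → E (n + 1))
    (hNmmeas : ∀ m, Measurable (Nm m)) (hNmeas : Measurable N)
    (hNmunit : ∀ m X, ‖Nm m X‖ = 1) (hNunit : ∀ X, ‖N X‖ = 1)
    (hNm : ∀ m, ∀ᵐ X ∂(μH[(n : ℝ)]).restrict (frontier (Km m)),
      IsOuterNormalAt (Km m) (Nm m X) X)
    (hN : ∀ᵐ X ∂(μH[(n : ℝ)]).restrict (frontier K), IsOuterNormalAt K (N X) X) :
    Tendsto (fun m => ∫ X in Km m, Ψ X * ‖fstE X‖ ^ (q - (n : ℝ))) atTop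
      (𝓝 (∫ X in K, Ψ X * ‖fstE X‖ ^ (q - (n : ℝ)))) ∧
    ∀ f : E (n + 1) → ℝ, Continuous f →
      Tendsto
        (fun m => ∫ ν, f ν ∂surfMeas (fun X => Ψ X * ‖fstE X‖ ^ (q - (n : ℝ))) (Km m) (Nm m))
        atTop
        (𝓝 (∫ ν, f ν ∂surfMeas (fun X => Ψ X * ‖fstE X‖ ^ (q - (n : ℝ))) K N)) := by
  exact statement_8_general q hq Ψ hΨc hΨ0 K hK hKc hKi Km hKm hconv
    (fun h => image_mono inter_subset_left (hq' h)) Nm N hNmmeas hNmeas hNm hN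

end PaperJU

end
end

section
/- Let γ_{n+1} be the standard Gaussian measure on ℝ^{n+1} and define d_γ(K,L) := γ_{n+1}(K Δ L). Then: (i) d_γ is a metric on the family K^{n+1}_+ of closed convex subsets of ℝ^{n+1} with nonempty interior whose orthogonal projection onto H = e_{n+1}^⊥ is a compact convex set with nonempty interior; (ii) for compact convex bodies K_m, K ⊂ ℝ^{n+1} with nonempty interior, d_γ(K_m, K) → 0 if and only if K_m → K in the Hausdorff metric; (iii) for u_m, u ∈ Conv_cd(ℝⁿ) with epigraphs in K^{n+1}_+, d_γ(epi(u_m), epi(u)) → 0 if and only if u_m epi-converges to u. -/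
open MeasureTheory Metric Set Filter
open scoped RealInnerProductSpace Pointwise Topology NNReal ENNReal

noncomputable section

namespace PaperJU

open Classical

variable {n : ℕ}

/-!
All three modes of convergence are Painlevé–Kuratowski convergence `Ls S ⊆ K ⊆ Li S`.

For closed convex sets, convergence in measure gives `K ⊆ Li S`, since `S i` cannot miss a fixed
open part of `K`. It gives `Ls S ⊆ K` by a cone argument: by Hahn–Banach, `S i` eventually contains
a fixed ball inside `K`, so if it also came close to some `x ∉ K` it would contain a fixed
nonnegligible part of the cone over that ball, lying outside `K`. Conversely,
Painlevé–Kuratowski convergence makes the indicators of `S i` converge off the frontier of `K`,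
which is null because `K` is convex, and dominated convergence applies.

For compact convex sets Painlevé–Kuratowski convergence is Hausdorff convergence: a connected set
cannot leave a neighbourhood of `K` without meeting its compact frontier. For epigraphs it is
epi-convergence, the liminf condition being `Ls ⊆ epi u` and the existence of recovery sequences
being `epi u ⊆ Li`.
-/

open scoped symmDiff

section KuratowskiLimits

variable {ι X Y : Type*} [TopologicalSpace X] [TopologicalSpace Y] {S : ι → Set X} {l : Filter ι}
  {K : Set X} {x : X}

/-- The lower Painlevé–Kuratowski limit `Li S` of a family of sets along a filter: the points all
of whose neighbourhoods eventually meet `S i`. -/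
def kuratowskiLi (S : ι → Set X) (l : Filter ι) : Set X :=
  {x | ∀ U ∈ 𝓝 x, ∀ᶠ i in l, (U ∩ S i).Nonempty}

/-- The upper Painlevé–Kuratowski limit `Ls S` of a family of sets along a filter: the points all
of whose neighbourhoods frequently meet `S i`. Encoding this with the product filter makes
uniformity over compact sets an instance of `IsCompact.mem_prod_nhdsSet_of_forall`. -/
def kuratowskiLs (S : ι → Set X) (l : Filter ι) : Set X :=
  {x | ∃ᶠ p : ι × X in l ×ˢ 𝓝 x, p.2 ∈ S p.1}

/-- Painlevé–Kuratowski convergence `Ls S ⊆ K ⊆ Li S`, the mode of convergence to which both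
Hausdorff convergence of convex bodies and epi-convergence of functions reduce. -/
structure PKTendsto (S : ι → Set X) (l : Filter ι) (K : Set X) : Prop where
  subset_li : K ⊆ kuratowskiLi S l
  ls_subset : kuratowskiLs S l ⊆ K

lemma isClosed_kuratowskiLi : IsClosed (kuratowskiLi S l) := by
  refine isClosed_of_closure_subset fun x hx U hU => ?_
  obtain ⟨y, hyU, hy⟩ := mem_closure_iff_nhds.1 hx _ (interior_mem_nhds.2 hU)
  exact hy U (mem_interior_iff_mem_nhds.1 hyU)

lemma kuratowskiLi_const [l.NeBot] : kuratowskiLi (fun _ : ι => K) l = closure K := by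
  ext x
  simp only [kuratowskiLi, eventually_const, mem_ofPred_eq, mem_closure_iff_nhds]

lemma mem_kuratowskiLi_of_tendsto {xs : ι → X} (hxs : Tendsto xs l (𝓝 x))
    (h : ∀ᶠ i in l, xs i ∈ S i) : x ∈ kuratowskiLi S l := by
  intro U hU
  filter_upwards [hxs hU, h] with i hU hS using ⟨xs i, hU, hS⟩

lemma kuratowskiLi_preimage (e : X ≃ₜ Y) (S : ι → Set Y) :
    kuratowskiLi (fun i => e ⁻¹' S i) l = e ⁻¹' kuratowskiLi S l := by
  have nonempty_iff (V : Set Y) (i : ι) : (e ⁻¹' V ∩ e ⁻¹' S i).Nonempty ↔ (V ∩ S i).Nonempty := by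
    rw [← preimage_inter, e.surjective.nonempty_preimage]
  ext x
  refine ⟨fun h V hV => ?_, fun h U hU => ?_⟩
  · simpa only [nonempty_iff] using h _ (e.continuous.continuousAt hV)
  · obtain ⟨V, hV, hVU⟩ := mem_comap.1 (e.nhds_eq_comap x ▸ hU)
    filter_upwards [h V hV] with i hi
    exact ((nonempty_iff V i).2 hi).mono (inter_subset_inter_left _ hVU)

lemma kuratowskiLs_preimage (e : X ≃ₜ Y) (S : ι → Set Y) :
    kuratowskiLs (fun i => e ⁻¹' S i) l = e ⁻¹' kuratowskiLs S l := by
  ext x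
  rw [mem_preimage, kuratowskiLs, kuratowskiLs, mem_ofPred_eq, mem_ofPred_eq, ← e.map_nhds_eq x,
    ← map_id (f := l), prod_map_map_eq, frequently_map, map_id]
  rfl

lemma pkTendsto_preimage_iff (e : X ≃ₜ Y) {S : ι → Set Y} {K : Set Y} :
    PKTendsto (fun i => e ⁻¹' S i) l (e ⁻¹' K) ↔ PKTendsto S l K := by
  have subset_iff {A B : Set Y} : e ⁻¹' A ⊆ e ⁻¹' B ↔ A ⊆ B :=
    e.surjective.preimage_subset_preimage_iff
  constructor
  · rintro ⟨hLi, hLs⟩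
    rw [kuratowskiLi_preimage, subset_iff] at hLi
    rw [kuratowskiLs_preimage, subset_iff] at hLs
    exact ⟨hLi, hLs⟩
  · rintro ⟨hLi, hLs⟩
    rw [← subset_iff, ← kuratowskiLi_preimage] at hLi
    rw [← subset_iff, ← kuratowskiLs_preimage] at hLs
    exact ⟨hLi, hLs⟩

lemma eventually_disjoint_of_isCompact {C : Set X} (hC : IsCompact C)
    (hdisj : Disjoint C (kuratowskiLs S l)) : ∀ᶠ i in l, Disjoint C (S i) := by
  have hnhds : ∀ᶠ p : ι × X in l ×ˢ 𝓝ˢ C, p.2 ∉ S p.1 :=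
    hC.mem_prod_nhdsSet_of_forall fun x hx => not_frequently.1 (disjoint_left.1 hdisj hx)
  filter_upwards [hnhds.curry] with i hi
  exact disjoint_left.2 fun x hx => hi.self_of_nhdsSet x hx

/-- Leaving `U` without meeting its frontier is impossible for a connected set. -/
lemma eventually_subset_of_isPreconnected {U : Set X} (hS : ∀ i, IsPreconnected (S i))
    (hU : IsOpen U) (hfrontier : IsCompact (frontier U)) (hLs : kuratowskiLs S l ⊆ U)
    (hmeet : (U ∩ kuratowskiLi S l).Nonempty) : ∀ᶠ i in l, S i ⊆ U := by
  obtain ⟨x, hxU, hx⟩ := hmeet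
  have hdisj : Disjoint (frontier U) (kuratowskiLs S l) :=
    (disjoint_frontier_iff_isOpen.2 hU).mono_right hLs
  filter_upwards [hx U (hU.mem_nhds hxU), eventually_disjoint_of_isCompact hfrontier hdisj]
    with i hmeets havoids
  refine (hS i).subset_of_closure_inter_subset hU (inter_comm _ _ ▸ hmeets) fun y hy => ?_
  by_contra hyU
  exact disjoint_left.1 havoids (hU.frontier_eq ▸ ⟨hy.1, hyU⟩) hy.2

end KuratowskiLimits

section SequentialLimits

variable {X : Type*} [TopologicalSpace X] {S : ℕ → Set X} {x : X}

lemma tendsto_extend_cofinite {α β : Type*} {f : α → β} {g : α → X}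
    (hg : Tendsto g cofinite (𝓝 x)) :
    Tendsto (Function.extend f g fun _ => x) cofinite (𝓝 x) := by
  intro U hU
  refine ((mem_cofinite.1 (hg hU)).image f).subset fun b hb => ?_
  by_cases h : ∃ a, f a = b
  · refine ⟨h.choose, ?_, h.choose_spec⟩
    simpa only [mem_compl_iff, mem_preimage, Function.extend, dif_pos h] using hb
  · exact absurd (mem_of_mem_nhds hU) (by
      simpa only [mem_compl_iff, mem_preimage, Function.extend, dif_neg h] using hb)

variable [FirstCountableTopology X]

lemma mem_kuratowskiLi_iff_exists_seq :
    x ∈ kuratowskiLi S atTop ↔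
      ∃ xs : ℕ → X, Tendsto xs atTop (𝓝 x) ∧ ∀ᶠ m in atTop, xs m ∈ S m := by
  refine ⟨fun hx => ?_, fun ⟨xs, hxs, h⟩ => mem_kuratowskiLi_of_tendsto hxs h⟩
  obtain ⟨U, hU⟩ := (𝓝 x).exists_antitone_basis
  have hmeet (k : ℕ) : ∀ᶠ m in atTop, (U k ∩ S m).Nonempty := hx _ (hU.1.mem_of_mem trivial)
  -- The deepest of the first `m` basic neighbourhoods that still meets `S m`.
  let depth (m : ℕ) : ℕ := Nat.findGreatest (fun k => (U k ∩ S m).Nonempty) m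
  have hdepth : Tendsto depth atTop atTop := by
    refine tendsto_atTop.2 fun k => ?_
    filter_upwards [hmeet k, eventually_ge_atTop k] with m hk hkm using Nat.le_findGreatest hkm hk
  have hpoint : ∀ᶠ m in atTop, ∃ y, y ∈ U (depth m) ∩ S m := by
    filter_upwards [hmeet 0] with m h0
    exact Nat.findGreatest_spec (P := fun k => (U k ∩ S m).Nonempty) m.zero_le h0
  have : Nonempty X := ⟨x⟩
  obtain ⟨xs, hxs⟩ := hpoint.choice
  refine ⟨xs, fun V hV => ?_, hxs.mono fun m hm => hm.2⟩
  rw [mem_map]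
  filter_upwards [hxs, hdepth.eventually (hU.eventually_subset hV)] with m hm hsub using hsub hm.1

lemma mem_kuratowskiLs_iff_exists_seq :
    x ∈ kuratowskiLs S atTop ↔
      ∃ xs : ℕ → X, Tendsto xs atTop (𝓝 x) ∧ ∃ᶠ m in atTop, xs m ∈ S m := by
  constructor
  · intro hx
    obtain ⟨p, hp, hpS⟩ := exists_seq_forall_of_frequently hx
    obtain ⟨φ, hφ, hidx⟩ := strictMono_subseq_of_tendsto_atTop hp.fst
    let index (k : ℕ) : ℕ := (p (φ k)).1
    let ys (k : ℕ) : X := (p (φ k)).2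
    have hys : Tendsto ys atTop (𝓝 x) := hp.snd.comp hφ.tendsto_atTop
    refine ⟨Function.extend index ys fun _ => x, ?_, ?_⟩
    · rw [← Nat.cofinite_eq_atTop] at hys ⊢
      exact tendsto_extend_cofinite hys
    · refine hidx.tendsto_atTop.frequently (Frequently.of_forall fun k => ?_)
      have hextend : Function.extend index ys (fun _ => x) (index k) = ys k :=
        Function.Injective.extend_apply hidx.injective ys _ k
      exact hextend ▸ hpS (φ k)
  · rintro ⟨xs, hxs, h⟩
    exact (tendsto_id.prodMk hxs).frequently h

end SequentialLimits

section Hausdorff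

variable {ι X : Type*} [PseudoMetricSpace X] {S : ι → Set X} {l : Filter ι} {K C : Set X}

lemma eventually_subset_thickening_s10 (hC : IsCompact C) (hCS : C ⊆ kuratowskiLi S l) {ε : ℝ}
    (hε : 0 < ε) : ∀ᶠ i in l, C ⊆ thickening ε (S i) := by
  have hnhds : ∀ᶠ p : ι × X in l ×ˢ 𝓝ˢ C, p.2 ∈ thickening ε (S p.1) := by
    refine hC.mem_prod_nhdsSet_of_forall fun x hx => ?_
    filter_upwards [(hCS hx _ (ball_mem_nhds x (half_pos hε))).prod_mk
      (ball_mem_nhds x (half_pos hε))] with p ⟨⟨y, hyx, hyS⟩, hpx⟩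
    exact mem_thickening_iff.2 ⟨y, hyS, by
      linarith [dist_triangle_right p.2 y x, mem_ball.1 hyx, mem_ball.1 hpx]⟩
  filter_upwards [hnhds.curry] with i hi using fun x hx => hi.self_of_nhdsSet x hx

lemma tendsto_hausdorffDist_zero_iff (hfin : ∀ i, hausdorffEDist (S i) K ≠ ⊤) :
    Tendsto (fun i => hausdorffDist (S i) K) l (𝓝 0) ↔
      ∀ ε > 0, ∀ᶠ i in l, S i ⊆ thickening ε K ∧ K ⊆ thickening ε (S i) := by
  refine ⟨fun h ε hε => ?_, fun h => Metric.tendsto_nhds.2 fun ε hε => ?_⟩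
  · filter_upwards [h.eventually_lt_const hε] with i hi
    refine ⟨fun x hx => mem_thickening_iff.2 (exists_dist_lt_of_hausdorffDist_lt hx hi (hfin i)),
      fun x hx => mem_thickening_iff.2 ?_⟩
    simpa only [dist_comm] using exists_dist_lt_of_hausdorffDist_lt' hx hi (hfin i)
  · filter_upwards [h (ε / 2) (half_pos hε)] with i ⟨hSK, hKS⟩
    rw [Real.dist_0_eq_abs, abs_of_nonneg hausdorffDist_nonneg]
    have exists_near {A B : Set X} (hAB : A ⊆ thickening (ε / 2) B) :
        ∀ x ∈ A, ∃ y ∈ B, dist x y ≤ ε / 2 := fun x hx =>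
      (mem_thickening_iff.1 (hAB hx)).imp fun _ hy => ⟨hy.1, hy.2.le⟩
    exact (hausdorffDist_le_of_mem_dist (half_pos hε).le (exists_near hSK)
      (exists_near hKS)).trans_lt (half_lt_self hε)

theorem pkTendsto_of_tendsto_hausdorffDist (hfin : ∀ i, hausdorffEDist (S i) K ≠ ⊤)
    (hK : IsClosed K) (h : Tendsto (fun i => hausdorffDist (S i) K) l (𝓝 0)) :
    PKTendsto S l K := by
  rw [tendsto_hausdorffDist_zero_iff hfin] at h
  refine ⟨fun x hx U hU => ?_, fun x => not_imp_not.1 fun hx => not_frequently.2 ?_⟩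
  · obtain ⟨ε, hε, hεU⟩ := Metric.mem_nhds_iff.1 hU
    filter_upwards [h ε hε] with i ⟨_, hKS⟩
    obtain ⟨y, hyS, hxy⟩ := mem_thickening_iff.1 (hKS hx)
    exact ⟨y, hεU (mem_ball'.2 hxy), hyS⟩
  · have hfar : ∀ᶠ ε in 𝓝[>] (0 : ℝ), x ∉ cthickening ε K :=
      (eventually_notMem_cthickening_of_infEDist_pos (hK.closure_eq.symm ▸ hx)).filter_mono
        nhdsWithin_le_nhds
    obtain ⟨ε, hxε, hε⟩ := (hfar.and self_mem_nhdsWithin).exists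
    filter_upwards [(h ε hε).prod_mk (isClosed_cthickening.isOpen_compl.mem_nhds hxε)]
      with p ⟨⟨hSK, _⟩, hp⟩ hpS
    exact hp (thickening_subset_cthickening ε K (hSK hpS))

theorem tendsto_hausdorffDist_of_pkTendsto [ProperSpace X]
    (hfin : ∀ i, hausdorffEDist (S i) K ≠ ⊤) (hS : ∀ i, IsPreconnected (S i)) (hK : IsCompact K)
    (hne : K.Nonempty) (h : PKTendsto S l K) :
    Tendsto (fun i => hausdorffDist (S i) K) l (𝓝 0) := by
  refine (tendsto_hausdorffDist_zero_iff hfin).2 fun ε hε => ?_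
  have hfrontier : IsCompact (frontier (thickening ε K)) :=
    isCompact_of_isClosed_isBounded isClosed_frontier
      (hK.isBounded.thickening.closure.subset frontier_subset_closure)
  have hsub := self_subset_thickening hε K
  exact (eventually_subset_of_isPreconnected hS isOpen_thickening hfrontier
    (h.ls_subset.trans hsub) (hne.mono (subset_inter hsub h.subset_li))).and
    (eventually_subset_thickening_s10 hK h.subset_li hε)

end Hausdorff

section ConvexSets

/-- In the cone from a point `y` near `x` over a neighbourhood `U` of `a`, the section at parameter
`t` is the preimage of `U` under `q ↦ lineMap y q t⁻¹`, which is continuous in `(y, q)`. -/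
lemma exists_nhds_forall_convex_subset {V : Type*} [AddCommGroup V] [Module ℝ V]
    [TopologicalSpace V] [IsTopologicalAddGroup V] [ContinuousSMul ℝ V] {x a : V} {U : Set V}
    (hU : U ∈ 𝓝 a) {t : ℝ} (ht : t ∈ Ioc 0 1) :
    ∃ W ∈ 𝓝 (AffineMap.lineMap x a t), ∀ᶠ y in 𝓝 x,
      ∀ S : Set V, Convex ℝ S → U ⊆ S → y ∈ S → W ⊆ S := by
  have lineMap_inv (y p : V) {s r : ℝ} (hrs : r * s = 1) :
      AffineMap.lineMap y (AffineMap.lineMap y p s) r = p := by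
    rw [AffineMap.lineMap_lineMap_right, hrs, AffineMap.lineMap_apply_one]
  have ht0 : t ≠ 0 := ht.1.ne'
  have hcont : Continuous fun p : V × V => AffineMap.lineMap p.1 p.2 t⁻¹ := by
    simp only [AffineMap.lineMap_apply_module]
    fun_prop
  have hpre : ∀ᶠ p in 𝓝 x ×ˢ 𝓝 (AffineMap.lineMap x a t), AffineMap.lineMap p.1 p.2 t⁻¹ ∈ U := by
    rw [← nhds_prod_eq]
    refine hcont.continuousAt ?_
    rwa [lineMap_inv x a (inv_mul_cancel₀ ht0)]
  obtain ⟨N, hN, W, hW, hNW⟩ := eventually_prod_iff.1 hpre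
  refine ⟨{q | W q}, hW, hN.mono fun y hy S hS hUS hyS q hq => ?_⟩
  rw [← lineMap_inv y q (mul_inv_cancel₀ ht0)]
  exact hS.lineMap_mem hyS (hUS (hNW hy hq)) ⟨ht.1.le, ht.2⟩

variable {ι V : Type*} [NormedAddCommGroup V] [NormedSpace ℝ V] {S : ι → Set V} {l : Filter ι}
  {K : Set V}

lemma mem_of_closedBall_subset_thickening {C : Set V} (hC : Convex ℝ C) (hCcl : IsClosed C) {x : V}
    {r : ℝ} (hr : 0 < r) (h : closedBall x r ⊆ thickening r C) : x ∈ C := by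
  by_contra hx
  obtain ⟨f, s, hfC, hfx⟩ := geometric_hahn_banach_closed_point hC hCcl hx
  have hupper (v : V) (hv : ‖v‖ ≤ r) : f v ≤ ‖f‖ * r - (f x - s) := by
    obtain ⟨y, hyC, hy⟩ := mem_thickening_iff.1 (h (show x + v ∈ closedBall x r by simpa using hv))
    have hfy : f (x + v - y) ≤ ‖f‖ * r :=
      (f.le_opNorm_of_le (dist_eq_norm (x + v) y ▸ hy.le)).trans' (Real.le_norm_self _)
    rw [map_sub, map_add] at hfy
    linarith [hfC y hyC]
  have hbound (v : V) (hv : ‖v‖ ≤ r) : ‖f v‖ ≤ ‖f‖ * r - (f x - s) :=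
    abs_le'.2 ⟨hupper v hv, map_neg f v ▸ hupper (-v) (norm_neg v ▸ hv)⟩
  have hgap : 0 < (f x - s) / r := div_pos (sub_pos.2 hfx) hr
  obtain ⟨v, hv, hfv⟩ := f.exists_lt_apply_of_lt_opNorm (sub_lt_self ‖f‖ hgap)
  have hrv : r * ‖f v‖ ≤ ‖f‖ * r - (f x - s) := by
    have := hbound (r • v) (by
      rw [norm_smul_of_nonneg hr.le]
      exact mul_le_of_le_one_right hr.le hv.le)
    rwa [map_smul, norm_smul_of_nonneg hr.le] at this
  refine hrv.not_gt ?_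
  calc ‖f‖ * r - (f x - s) = r * (‖f‖ - (f x - s) / r) := by field_simp
    _ < r * ‖f v‖ := mul_lt_mul_of_pos_left hfv hr

lemma exists_nhds_eventually_subset [ProperSpace V] (hS : ∀ i, Convex ℝ (S i))
    (hScl : ∀ i, IsClosed (S i)) {a : V} (ha : a ∈ interior (kuratowskiLi S l)) :
    ∃ U ∈ 𝓝 a, ∀ᶠ i in l, U ⊆ S i := by
  obtain ⟨r, hr, hball⟩ := nhds_basis_closedBall.mem_iff.1 (mem_interior_iff_mem_nhds.1 ha)
  refine ⟨closedBall a (r / 2), closedBall_mem_nhds a (half_pos hr), ?_⟩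
  filter_upwards [eventually_subset_thickening_s10 (isCompact_closedBall a r) hball (half_pos hr)]
    with i hi x hx
  refine mem_of_closedBall_subset_thickening (hS i) (hScl i) (half_pos hr)
    ((closedBall_subset_closedBall' ?_).trans hi)
  linarith [mem_closedBall.1 hx]

/-- A closed convex set with nonempty interior; unlike Mathlib's `ConvexBody` it may be unbounded,
as epigraphs are. -/
structure IsClosedConvexBody (K : Set V) : Prop where
  convex : Convex ℝ K
  isClosed : IsClosed K
  interior_nonempty : (interior K).Nonempty

lemma IsClosedConvexBody.subset_closure_interior (hK : IsClosedConvexBody K) :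
    K ⊆ closure (interior K) :=
  hK.convex.closure_interior_eq_closure_of_nonempty_interior hK.interior_nonempty ▸ subset_closure

end ConvexSets

section SymmDiffDistance

section OpenPos

variable {ι X : Type*} [TopologicalSpace X] [MeasurableSpace X] {μ : Measure X} [IsFiniteMeasure μ]
  [μ.IsOpenPosMeasure] {S : ι → Set X} {l : Filter ι} {K L : Set X}

lemma eventually_not_subset_symmDiff (h : Tendsto (fun i => μ.real (S i ∆ K)) l (𝓝 0)) {c : X}
    {W : Set X} (hW : W ∈ 𝓝 c) : ∀ᶠ i in l, ¬ W ⊆ S i ∆ K := by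
  have hpos : 0 < μ.real W :=
    ENNReal.toReal_pos (Measure.measure_pos_of_mem_nhds μ hW).ne' (measure_ne_top μ W)
  filter_upwards [h.eventually_lt_const hpos] with i hi hsub
  exact (measureReal_mono hsub).not_gt hi

lemma subset_kuratowskiLi_of_tendsto_measureReal (hK : K ⊆ closure (interior K))
    (h : Tendsto (fun i => μ.real (S i ∆ K)) l (𝓝 0)) : K ⊆ kuratowskiLi S l := by
  intro x hx U hU
  obtain ⟨c, hcU, hcK⟩ := mem_closure_iff_nhds.1 (hK hx) _ (interior_mem_nhds.2 hU)
  have hW : U ∩ K ∈ 𝓝 c :=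
    inter_mem (mem_interior_iff_mem_nhds.1 hcU) (mem_interior_iff_mem_nhds.1 hcK)
  filter_upwards [eventually_not_subset_symmDiff h hW] with i hi
  obtain ⟨y, hy, hyS⟩ := not_subset.1 hi
  exact ⟨y, hy.1, by_contra fun hyn => hyS (Or.inr ⟨hy.2, hyn⟩)⟩

lemma subset_of_measureReal_symmDiff_eq_zero (hK : K ⊆ closure (interior K)) (hL : IsClosed L)
    (h : μ.real (L ∆ K) = 0) : K ⊆ L := by
  have hconst : Tendsto (fun _ : ℕ => μ.real (L ∆ K)) atTop (𝓝 0) := h ▸ tendsto_const_nhds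
  have hLi := subset_kuratowskiLi_of_tendsto_measureReal hK hconst
  rwa [kuratowskiLi_const, hL.closure_eq] at hLi

end OpenPos

variable {ι V : Type*} [NormedAddCommGroup V] [NormedSpace ℝ V] [MeasurableSpace V]
  {μ ν : Measure V} [IsFiniteMeasure μ] {S : ι → Set V} {l : Filter ι} {K L : Set V}

theorem measureReal_symmDiff_eq_zero_iff [μ.IsOpenPosMeasure] (hK : IsClosedConvexBody K)
    (hL : IsClosedConvexBody L) : μ.real (K ∆ L) = 0 ↔ K = L := by
  refine ⟨fun h => ?_, by rintro rfl; simp⟩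
  exact (subset_of_measureReal_symmDiff_eq_zero hK.subset_closure_interior hL.isClosed
      (symmDiff_comm K L ▸ h)).antisymm
    (subset_of_measureReal_symmDiff_eq_zero hL.subset_closure_interior hK.isClosed h)

variable [FiniteDimensional ℝ V]

/-- If `S i` kept coming close to `x ∉ K`, then, containing a fixed neighbourhood of a point of `K`,
it would contain the section of a cone near `x`, a nonnegligible set outside `K`. -/
lemma kuratowskiLs_subset_of_tendsto_measureReal [μ.IsOpenPosMeasure] (hS : ∀ i, Convex ℝ (S i))
    (hScl : ∀ i, IsClosed (S i)) (hK : IsClosedConvexBody K)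
    (h : Tendsto (fun i => μ.real (S i ∆ K)) l (𝓝 0)) : kuratowskiLs S l ⊆ K := by
  refine fun x => not_imp_not.1 fun hx => not_frequently.2 ?_
  obtain ⟨a, ha⟩ := hK.interior_nonempty
  obtain ⟨U, hU, hUS⟩ := exists_nhds_eventually_subset hS hScl (interior_mono
    (subset_kuratowskiLi_of_tendsto_measureReal hK.subset_closure_interior h) ha)
  have houtside : ∀ᶠ t : ℝ in 𝓝[>] 0, AffineMap.lineMap x a t ∈ Kᶜ := by
    refine AffineMap.lineMap_continuous.continuousWithinAt (hK.isClosed.isOpen_compl.mem_nhds ?_)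
    rwa [AffineMap.lineMap_apply_zero]
  obtain ⟨t, htK, ht⟩ := (houtside.and (Ioc_mem_nhdsGT one_pos)).exists
  obtain ⟨W, hW, hcone⟩ := exists_nhds_forall_convex_subset (x := x) hU ht
  have hWK : W ∩ Kᶜ ∈ 𝓝 (AffineMap.lineMap x a t) :=
    inter_mem hW (hK.isClosed.isOpen_compl.mem_nhds htK)
  filter_upwards [(hUS.and (eventually_not_subset_symmDiff h hWK)).prod_mk hcone]
    with p ⟨⟨hpU, hpW⟩, hpcone⟩ hpS
  exact hpW fun q hq => Or.inl ⟨hpcone _ (hS p.1) hpU hpS hq.1, hq.2⟩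

lemma tendsto_measureReal_of_pkTendsto [OpensMeasurableSpace V] [l.IsCountablyGenerated]
    (hS : ∀ i, Convex ℝ (S i)) (hScl : ∀ i, IsClosed (S i)) (hK : IsClosed K)
    (hfrontier : μ (frontier K) = 0) (h : PKTendsto S l K) :
    Tendsto (fun i => μ.real (S i ∆ K)) l (𝓝 0) := by
  have hpointwise : ∀ᵐ x ∂μ, ∀ᶠ i in l, x ∈ S i ∆ K ↔ x ∈ (∅ : Set V) := by
    filter_upwards [measure_eq_zero_iff_ae_notMem.1 hfrontier] with x hx
    by_cases hxK : x ∈ K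
    · have hxint : x ∈ interior K := by_contra fun hxn => hx ⟨subset_closure hxK, hxn⟩
      obtain ⟨U, hU, hUS⟩ :=
        exists_nhds_eventually_subset hS hScl (interior_mono h.subset_li hxint)
      filter_upwards [hUS] with i hi
      simp [mem_symmDiff, hxK, hi (mem_of_mem_nhds hU)]
    · filter_upwards [(not_frequently.1 fun hxLs => hxK (h.ls_subset hxLs)).curry] with i hi
      simp [mem_symmDiff, hxK, hi.self_of_nhds]
  have htendsto := tendsto_measure_of_ae_tendsto_indicator_of_isFiniteMeasure l .empty
    (fun i => (hScl i).measurableSet.symmDiff hK.measurableSet) hpointwise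
  rw [measure_empty] at htendsto
  exact (ENNReal.tendsto_toReal ENNReal.zero_ne_top).comp htendsto

theorem tendsto_measureReal_symmDiff_iff_pkTendsto [BorelSpace V] [ν.IsAddHaarMeasure]
    [μ.IsOpenPosMeasure] [l.IsCountablyGenerated] (hμ : μ ≪ ν) (hS : ∀ i, Convex ℝ (S i))
    (hScl : ∀ i, IsClosed (S i)) (hK : IsClosedConvexBody K) :
    Tendsto (fun i => μ.real (S i ∆ K)) l (𝓝 0) ↔ PKTendsto S l K :=
  ⟨fun h => ⟨subset_kuratowskiLi_of_tendsto_measureReal hK.subset_closure_interior h,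
      kuratowskiLs_subset_of_tendsto_measureReal hS hScl hK h⟩,
    tendsto_measureReal_of_pkTendsto hS hScl hK.isClosed (hμ (hK.convex.addHaar_frontier ν))⟩

theorem tendsto_measureReal_symmDiff_iff_tendsto_hausdorffDist [BorelSpace V]
    [ν.IsAddHaarMeasure] [μ.IsOpenPosMeasure] [l.IsCountablyGenerated] (hμ : μ ≪ ν)
    (hS : ∀ i, Convex ℝ (S i)) (hScpt : ∀ i, IsCompact (S i)) (hSne : ∀ i, (S i).Nonempty)
    (hK : IsClosedConvexBody K) (hKcpt : IsCompact K) :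
    Tendsto (fun i => μ.real (S i ∆ K)) l (𝓝 0) ↔
      Tendsto (fun i => hausdorffDist (S i) K) l (𝓝 0) := by
  have hKne : K.Nonempty := hK.interior_nonempty.mono interior_subset
  have hfin (i : ι) : hausdorffEDist (S i) K ≠ ⊤ :=
    hausdorffEDist_ne_top_of_nonempty_of_bounded (hSne i) hKne (hScpt i).isBounded
      hKcpt.isBounded
  rw [tendsto_measureReal_symmDiff_iff_pkTendsto hμ hS (fun i => (hScpt i).isClosed) hK]
  exact ⟨tendsto_hausdorffDist_of_pkTendsto hfin (fun i => (hS i).isPreconnected) hKcpt hKne,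
    pkTendsto_of_tendsto_hausdorffDist hfin hK.isClosed⟩

end SymmDiffDistance

section EpiConvergence

variable {um : ℕ → E n → EReal} {u : E n → EReal}

/-- The identification `(x, z) ↦ pairE x z` of ℝⁿ × ℝ with ℝⁿ⁺¹, which carries `epi u` to
`epiF u`. -/
def pairHomeomorph : E n × ℝ ≃ₜ E (n + 1) where
  toFun p := pairE p.1 p.2
  invFun X := (fstE X, sndE X)
  left_inv p := by
    ext i
    · simp [fstE, pairE, Fin.init]
    · simp [sndE, pairE]
  right_inv X := by
    ext i
    refine Fin.lastCases ?_ (fun j => ?_) i <;> simp [fstE, pairE, sndE, Fin.init]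
  continuous_toFun := by
    unfold pairE
    fun_prop
  continuous_invFun := by
    unfold fstE sndE Fin.init
    fun_prop

lemma pkTendsto_epiF_iff :
    PKTendsto (fun m => epiF (um m)) atTop (epiF u) ↔
      PKTendsto (fun m => epi (um m)) atTop (epi u) :=
  pkTendsto_preimage_iff (pairHomeomorph (n := n)).symm (S := fun m => epi (um m)) (K := epi u)

lemma kuratowskiLs_epi_subset_iff :
    kuratowskiLs (fun m => epi (um m)) atTop ⊆ epi u ↔ ∀ (x : E n) (xs : ℕ → E n),
      Tendsto xs atTop (𝓝 x) → u x ≤ liminf (fun m => um m (xs m)) atTop := by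
  constructor
  · intro h x xs hxs
    refine EReal.ge_of_forall_gt_iff_ge.1 fun z hz => le_liminf_of_le (by isBoundedDefault) ?_
    have habove : ¬ ∃ᶠ m in atTop, (xs m, z) ∈ epi (um m) := fun hfreq => hz.not_ge <|
      h (mem_kuratowskiLs_iff_exists_seq.2 ⟨_, hxs.prodMk_nhds tendsto_const_nhds, hfreq⟩)
    exact (not_frequently.1 habove).mono fun m hm => (not_le.1 hm).le
  · rintro h ⟨x, s⟩ hxs
    obtain ⟨p, hp, hfreq⟩ := mem_kuratowskiLs_iff_exists_seq.1 hxs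
    by_contra hsu
    obtain ⟨z, hsz, hzu⟩ := EReal.lt_iff_exists_real_btwn.1 (not_le.1 hsu)
    refine hfreq ?_
    filter_upwards [eventually_lt_of_lt_liminf (hzu.trans_le (h x _ hp.fst_nhds)),
      hp.snd_nhds.eventually_lt_const (EReal.coe_lt_coe_iff.1 hsz)] with m hzum hpz hpm
    exact (hzum.trans_le hpm).not_gt (EReal.coe_lt_coe_iff.2 hpz)

lemma epi_subset_kuratowskiLi_iff (hu : ∀ x, u x ≠ ⊥) :
    epi u ⊆ kuratowskiLi (fun m => epi (um m)) atTop ↔ ∀ x : E n, ∃ xs : ℕ → E n,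
      Tendsto xs atTop (𝓝 x) ∧ limsup (fun m => um m (xs m)) atTop ≤ u x := by
  constructor
  · intro h x
    by_cases htop : u x = ⊤
    · exact ⟨fun _ => x, tendsto_const_nhds, htop ▸ le_top⟩
    have hux : ((u x).toReal : EReal) = u x := EReal.coe_toReal htop (hu x)
    obtain ⟨p, hp, hpm⟩ := mem_kuratowskiLi_iff_exists_seq.1
      (h (show (x, (u x).toReal) ∈ epi u from hux.ge))
    have hheight : Tendsto (fun m => ((p m).2 : EReal)) atTop (𝓝 (u x)) :=
      hux ▸ (continuous_coe_real_ereal.tendsto _).comp hp.snd_nhds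
    have hbelow : (fun m => um m (p m).1) ≤ᶠ[atTop] fun m => ((p m).2 : EReal) := hpm
    exact ⟨_, hp.fst_nhds, (limsup_le_limsup hbelow).trans hheight.limsup_eq.le⟩
  · rintro h ⟨x, s⟩ hxs
    obtain ⟨xs, hxs_lim, hlimsup⟩ := h x
    have habove : ∀ᶠ t in 𝓝[>] s, (x, t) ∈ kuratowskiLi (fun m => epi (um m)) atTop := by
      filter_upwards [self_mem_nhdsWithin] with t ht
      have hlt : limsup (fun m => um m (xs m)) atTop < t :=
        (hlimsup.trans hxs).trans_lt (EReal.coe_lt_coe_iff.2 ht)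
      exact mem_kuratowskiLi_of_tendsto (hxs_lim.prodMk_nhds tendsto_const_nhds)
        ((eventually_lt_of_limsup_lt hlt).mono fun m hm => hm.le)
    have hlim : Tendsto (fun t => (x, t)) (𝓝[>] s) (𝓝 (x, s)) :=
      tendsto_const_nhds.prodMk_nhds (tendsto_id.mono_left nhdsWithin_le_nhds)
    exact isClosed_kuratowskiLi.mem_of_tendsto hlim habove

theorem epiConverges_iff_pkTendsto (hu : ∀ x, u x ≠ ⊥) :
    EpiConverges um u ↔ PKTendsto (fun m => epi (um m)) atTop (epi u) := by
  constructor
  · intro h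
    exact ⟨(epi_subset_kuratowskiLi_iff hu).2 fun x =>
        (h x).2.imp fun xs hxs => ⟨hxs.1, hxs.2.limsup_eq.le⟩,
      kuratowskiLs_epi_subset_iff.2 fun x => (h x).1⟩
  · rintro ⟨hLi, hLs⟩ x
    have hliminf := kuratowskiLs_epi_subset_iff.1 hLs x
    obtain ⟨xs, hxs, hlimsup⟩ := (epi_subset_kuratowskiLi_iff hu).1 hLi x
    exact ⟨hliminf, xs, hxs, tendsto_of_le_liminf_of_limsup_le (hliminf xs hxs) hlimsup⟩

end EpiConvergence

section Gaussian

variable (m : ℕ)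

lemma gaussDensity_pos (X : E m) : 0 < gaussDensity m X := by
  unfold gaussDensity
  positivity

lemma continuous_gaussDensity : Continuous (gaussDensity m) := by
  unfold gaussDensity
  fun_prop

lemma integrable_gaussDensity : Integrable (gaussDensity m) := by
  have hexp : Integrable fun X : E m => Real.exp (-(1 / 2) * ‖X‖ ^ 2) := by
    refine .of_integral_ne_zero ?_
    rw [GaussianFourier.integral_rexp_neg_mul_sq_norm one_half_pos]
    positivity
  refine (hexp.const_mul ((2 * Real.pi) ^ (-(m : ℝ) / 2))).congr (ae_of_all _ fun X => ?_)
  rw [gaussDensity]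
  ring_nf

instance : IsFiniteMeasure (gaussMeas m) :=
  isFiniteMeasure_withDensity_ofReal (integrable_gaussDensity m).2

lemma gaussMeas_absolutelyContinuous : gaussMeas m ≪ volume :=
  withDensity_absolutelyContinuous _ _

instance : (gaussMeas m).IsOpenPosMeasure := by
  refine (withDensity_absolutelyContinuous' (μ := volume)
    (continuous_gaussDensity m).measurable.ennreal_ofReal.aemeasurable
    (ae_of_all _ fun X => ?_)).isOpenPosMeasure
  exact (ENNReal.ofReal_pos.2 (gaussDensity_pos m X)).ne'

end Gaussian

lemma isClosedConvexBody_of_mem_KPlus {K : Set (E (n + 1))} (hK : K ∈ KPlus n) :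
    IsClosedConvexBody K :=
  ⟨hK.1, hK.2.1, hK.2.2.1⟩

theorem statement_10_general {μ : Measure (E (n + 1))} [IsFiniteMeasure μ] [μ.IsOpenPosMeasure]
    (hμ : μ ≪ volume) :
    (∀ K L, IsClosedConvexBody K → IsClosedConvexBody L → (μ.real (K ∆ L) = 0 ↔ K = L)) ∧
    (∀ K L, μ.real (K ∆ L) = μ.real (L ∆ K)) ∧
    (∀ K L J, μ.real (K ∆ J) ≤ μ.real (K ∆ L) + μ.real (L ∆ J)) ∧
    (∀ (Km : ℕ → Set (E (n + 1))) (K : Set (E (n + 1))),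
      (∀ m, IsCompact (Km m) ∧ Convex ℝ (Km m) ∧ (Km m).Nonempty) →
      IsCompact K → IsClosedConvexBody K →
      (Tendsto (fun m => μ.real (Km m ∆ K)) atTop (𝓝 0) ↔
        Tendsto (fun m => hausdorffDist (Km m) K) atTop (𝓝 0))) ∧
    (∀ (um : ℕ → E n → EReal) (u : E n → EReal), (∀ x, u x ≠ ⊥) →
      (∀ m, Convex ℝ (epiF (um m)) ∧ IsClosed (epiF (um m))) → IsClosedConvexBody (epiF u) →
      (Tendsto (fun m => μ.real (epiF (um m) ∆ epiF u)) atTop (𝓝 0) ↔ EpiConverges um u)) := by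
  refine ⟨fun K L => measureReal_symmDiff_eq_zero_iff, fun K L => by rw [symmDiff_comm],
    fun K L J => measureReal_symmDiff_le J, fun Km K hKm hKcpt hK => ?_, fun um u hu hum hK => ?_⟩
  · exact tendsto_measureReal_symmDiff_iff_tendsto_hausdorffDist hμ (fun m => (hKm m).2.1)
      (fun m => (hKm m).1) (fun m => (hKm m).2.2) hK hKcpt
  · rw [epiConverges_iff_pkTendsto hu, ← pkTendsto_epiF_iff]
    exact tendsto_measureReal_symmDiff_iff_pkTendsto hμ (fun m => (hum m).1) (fun m => (hum m).2) hK

theorem statement_10 {n : ℕ} :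
    (∀ K ∈ KPlus n, ∀ L ∈ KPlus n, (dGauss K L = 0 ↔ K = L)) ∧
    (∀ K ∈ KPlus n, ∀ L ∈ KPlus n, dGauss K L = dGauss L K) ∧
    (∀ K ∈ KPlus n, ∀ L ∈ KPlus n, ∀ J ∈ KPlus n, dGauss K J ≤ dGauss K L + dGauss L J) ∧
    (∀ (Km : ℕ → Set (E (n + 1))) (K : Set (E (n + 1))),
      (∀ m, IsCompact (Km m) ∧ Convex ℝ (Km m) ∧ (interior (Km m)).Nonempty) →
      IsCompact K → Convex ℝ K → (interior K).Nonempty →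
      (Tendsto (fun m => dGauss (Km m) K) atTop (𝓝 0) ↔
        Tendsto (fun m => hausdorffDist (Km m) K) atTop (𝓝 0))) ∧
    (∀ (um : ℕ → E n → EReal) (u : E n → EReal),
      (∀ m, IsConvCd (um m)) → IsConvCd u →
      (∀ m, epiF (um m) ∈ KPlus n) → epiF u ∈ KPlus n →
      (Tendsto (fun m => dGauss (epiF (um m)) (epiF u)) atTop (𝓝 0) ↔
        EpiConverges um u)) := by
  obtain ⟨hzero, hsymm, htriangle, hhausdorff, hepi⟩ :=
    statement_10_general (gaussMeas_absolutelyContinuous (n + 1))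
  have hbody {K} (hK : K ∈ KPlus n) := isClosedConvexBody_of_mem_KPlus hK
  exact ⟨fun K hK L hL => hzero K L (hbody hK) (hbody hL), fun K _ L _ => hsymm K L,
    fun K _ L _ J _ => htriangle K L J,
    fun Km K hKm hKcpt hKconv hKint => hhausdorff Km K
      (fun m => (hKm m).imp_right (And.imp_right (·.mono interior_subset)))
      hKcpt ⟨hKconv, hKcpt.isClosed, hKint⟩,
    fun um u _ hu hum hK => hepi um u hu.1.ne_bot
      (fun m => ⟨(hum m).1, (hum m).2.1⟩) (hbody hK)⟩

end PaperJU

end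
end
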